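/- arXiv:1511.07240 — 5 statements merged into one kernel-verified Lean document; each statement's English description precedes it below -/
import Mathlib

section
/- Let β₀ > 0 and let g be a holomorphic function on the upper half-plane ℍ satisfying g(z+1) = g(z) for all z ∈ ℍ, the Bloch bound 2 Im(z)|g'(z)| ≤ β₀ for all z ∈ ℍ, and g(x+iy) → 0 uniformly in x as y → ∞. Then for every p ∈ ℂ, p ≠ 0, letting β > 0 be the positive root of β² + β = β₀²|p|²/4, one has limsup_{y→0⁺} [ log( ∫₀¹ exp( Re(p·g(x+iy)) ) dx ) / log(1/y) ] ≤ β; in particular this limsup is at most β₀²|p|²/4. (Taking β₀ = 6k, this yields the Becker–Pommerenke bound β_f(p) ≤ 9k²|p|² for conformal maps f whose branch of log f' has Bloch norm at most 6k.) -/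
open Complex MeasureTheory Filter Topology Set

/-- The integral means `I_p(y) = ∫₀¹ exp(Re(p·g(x+iy))) dx`. -/
noncomputable def Ip (g : ℂ → ℂ) (p : ℂ) (y : ℝ) : ℝ :=
  ∫ x in (0:ℝ)..1, Real.exp ((p * g ((x : ℂ) + (y : ℂ) * Complex.I)).re)

/-- The claimed first derivative of `I_p`:
`I_p'(y) = −∫₀¹ exp(Re(p·g(x+iy))) · Im(p·g'(x+iy)) dx`. -/
noncomputable def Ip' (g : ℂ → ℂ) (p : ℂ) (y : ℝ) : ℝ :=
  -∫ x in (0:ℝ)..1, Real.exp ((p * g ((x : ℂ) + (y : ℂ) * Complex.I)).re) *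
      (p * deriv g ((x : ℂ) + (y : ℂ) * Complex.I)).im

/-- The claimed second derivative of `I_p`:
`I_p''(y) = |p|² ∫₀¹ exp(Re(p·g(x+iy))) · |g'(x+iy)|² dx`. -/
noncomputable def Ip'' (g : ℂ → ℂ) (p : ℂ) (y : ℝ) : ℝ :=
  ‖p‖^2 * ∫ x in (0:ℝ)..1, Real.exp ((p * g ((x : ℂ) + (y : ℂ) * Complex.I)).re) *
      ‖deriv g ((x : ℂ) + (y : ℂ) * Complex.I)‖^2

/-! The Bloch bound turns Hardy's identity `I_p'' = |p|² ∫ exp(Re(p·g)) |g'|²` into the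
differential inequality `y² I_p'' ≤ (β² + β) I_p`. Comparison with the solutions `y ^ (-β)` and
`y ^ (1 + β)` of the Euler equation gives `I_p(y) = O(y ^ (-β))` as `y → 0`. -/

open UpperHalfPlane (upperHalfPlaneSet isOpen_upperHalfPlaneSet)

section EulerInequality

variable {F F' F'' : ℝ → ℝ}

lemma antitoneOn_rpow_neg_mul_of_mul_deriv_le {s : Set ℝ} {γ : ℝ} (hs : Convex ℝ s)
    (hs0 : s ⊆ Ioi 0) (hF : ∀ y ∈ s, HasDerivAt F (F' y) y) (hle : ∀ y ∈ s, y * F' y ≤ γ * F y) :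
    AntitoneOn (fun y ↦ y ^ (-γ) * F y) s := by
  have hd (y : ℝ) (hy : y ∈ s) :
      HasDerivAt (fun y ↦ y ^ (-γ) * F y) (y ^ (-γ - 1) * (y * F' y - γ * F y)) y := by
    have hy0 : y ≠ 0 := (hs0 hy).ne'
    refine ((Real.hasDerivAt_rpow_const (p := -γ) (.inl hy0)).mul (hF y hy)).congr_deriv ?_
    have hpow : y ^ (-γ) = y ^ (-γ - 1) * y := by
      rw [← Real.rpow_add_one hy0, sub_add_cancel]
    rw [hpow]
    ring
  refine antitoneOn_of_hasDerivWithinAt_nonpos hs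
    (fun y hy ↦ (hd y hy).continuousAt.continuousWithinAt)
    (fun y hy ↦ (hd y (interior_subset hy)).hasDerivWithinAt) fun y hy ↦ ?_
  have hy := interior_subset hy
  exact mul_nonpos_of_nonneg_of_nonpos (Real.rpow_nonneg (hs0 hy).le _)
    (sub_nonpos.2 (hle y hy))

lemma mul_rpow_le_of_mul_deriv_le {γ : ℝ} (hF : ∀ y ∈ Ioc (0 : ℝ) 1, HasDerivAt F (F' y) y)
    (hle : ∀ y ∈ Ioc (0 : ℝ) 1, y * F' y ≤ γ * F y) {y : ℝ} (hy : y ∈ Ioc (0 : ℝ) 1) :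
    F 1 * y ^ γ ≤ F y := by
  have hanti := antitoneOn_rpow_neg_mul_of_mul_deriv_le (convex_Ioc 0 1) Ioc_subset_Ioi_self hF hle
    hy (right_mem_Ioc.2 one_pos) hy.2
  simp only [Real.one_rpow, one_mul, Real.rpow_neg hy.1.le] at hanti
  rwa [inv_mul_eq_div, le_div_iff₀ (Real.rpow_pos_of_pos hy.1 γ)] at hanti

/- Since `y² (d/dy)² - (β² + β) = (y d/dy - (1 + β)) (y d/dy + β)`, the function `K = y F' + β F`
is at least `-|K 1| y ^ (1 + β)`; adding `c y ^ (1 + β)` to `F` absorbs this error. -/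
theorem exists_le_mul_rpow_neg_of_sq_mul_deriv2_le {β : ℝ} (hβ : -1 < 2 * β)
    (hF : ∀ y ∈ Ioc (0 : ℝ) 1, HasDerivAt F (F' y) y)
    (hF' : ∀ y ∈ Ioc (0 : ℝ) 1, HasDerivAt F' (F'' y) y)
    (hle : ∀ y ∈ Ioc (0 : ℝ) 1, y ^ 2 * F'' y ≤ (β ^ 2 + β) * F y) :
    ∃ A, ∀ y ∈ Ioc (0 : ℝ) 1, F y ≤ A * y ^ (-β) := by
  let K (y : ℝ) : ℝ := y * F' y + β * F y
  have hK (y : ℝ) (hy : y ∈ Ioc (0 : ℝ) 1) :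
      HasDerivAt K (F' y + y * F'' y + β * F' y) y :=
    (((hasDerivAt_id y).mul (hF' y hy)).add ((hF y hy).const_mul β)).congr_deriv (by
      simp only [id, one_mul])
  have hK_lower (y : ℝ) (hy : y ∈ Ioc (0 : ℝ) 1) : K 1 * y ^ (1 + β) ≤ K y :=
    mul_rpow_le_of_mul_deriv_le hK (fun y hy ↦ by linear_combination hle y hy) hy
  let c := |K 1| / (1 + 2 * β)
  have hc : c * (1 + 2 * β) = |K 1| := div_mul_cancel₀ _ (by linarith)
  have hc0 : 0 ≤ c := div_nonneg (abs_nonneg _) (by linarith)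
  let G (y : ℝ) : ℝ := -(F y + c * y ^ (1 + β))
  have hG (y : ℝ) (hy : y ∈ Ioc (0 : ℝ) 1) :
      HasDerivAt G (-(F' y + c * ((1 + β) * y ^ β))) y :=
    ((hF y hy).add (((Real.hasDerivAt_rpow_const (.inl hy.1.ne')).const_mul c))).neg.congr_deriv
      (by rw [add_sub_cancel_left])
  have hG_le (y : ℝ) (hy : y ∈ Ioc (0 : ℝ) 1) :
      y * -(F' y + c * ((1 + β) * y ^ β)) ≤ -β * G y := by
    have hpow : y ^ (1 + β) = y * y ^ β := Real.rpow_one_add' hy.1.le (by linarith)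
    have habs : -|K 1| * y ^ (1 + β) ≤ K 1 * y ^ (1 + β) :=
      mul_le_mul_of_nonneg_right (neg_abs_le _) (Real.rpow_nonneg hy.1.le _)
    simp only [G]
    linear_combination hK_lower y hy + habs + (c * (1 + β)) * hpow - y ^ (1 + β) * hc
  refine ⟨-G 1, fun y hy ↦ ?_⟩
  have hG_lower : G 1 * y ^ (-β) ≤ G y := mul_rpow_le_of_mul_deriv_le hG hG_le hy
  have hy_rpow : 0 ≤ c * y ^ (1 + β) := mul_nonneg hc0 (Real.rpow_nonneg hy.1.le _)
  simp only [G] at hG_lower ⊢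
  linarith

end EulerInequality

section GrowthExponent

lemma tendsto_log_one_div_nhdsGT_zero :
    Tendsto (fun y : ℝ ↦ Real.log (1 / y)) (𝓝[>] 0) atTop := by
  simp only [one_div]
  exact Real.tendsto_log_atTop.comp tendsto_inv_nhdsGT_zero

lemma tendsto_log_mul_rpow_div_log_one_div {A : ℝ} (hA : 0 < A) (β : ℝ) :
    Tendsto (fun y : ℝ ↦ Real.log (A * y ^ (-β)) / Real.log (1 / y)) (𝓝[>] 0) (𝓝 β) := by
  have hlim := (tendsto_log_one_div_nhdsGT_zero.const_div_atTop (Real.log A)).add_const β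
  rw [zero_add] at hlim
  refine hlim.congr' ?_
  filter_upwards [self_mem_nhdsWithin, tendsto_log_one_div_nhdsGT_zero.eventually_gt_atTop 0]
    with y (hy : 0 < y) hlog
  rw [Real.log_mul hA.ne' (Real.rpow_pos_of_pos hy _).ne', Real.log_rpow hy, add_div, neg_mul,
    ← mul_neg, ← Real.log_inv, ← one_div, mul_div_cancel_right₀ _ hlog.ne']

-- The lower bound keeps the quotient bounded below; a real `limsup` is otherwise the junk value
-- `sInf = 0` of a set unbounded below.
theorem limsup_log_div_log_one_div_le {F : ℝ → ℝ} {c γ A β : ℝ} (hc : 0 < c)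
    (hlower : ∀ᶠ y in 𝓝[>] 0, c * y ^ γ ≤ F y)
    (hupper : ∀ᶠ y in 𝓝[>] 0, F y ≤ A * y ^ (-β)) :
    limsup (fun y ↦ Real.log (F y) / Real.log (1 / y)) (𝓝[>] 0) ≤ β := by
  have hpos : ∀ᶠ y : ℝ in 𝓝[>] 0, 0 < c * y ^ γ := by
    filter_upwards [self_mem_nhdsWithin] with y hy
    exact mul_pos hc (Real.rpow_pos_of_pos hy _)
  have hlog := tendsto_log_one_div_nhdsGT_zero.eventually_gt_atTop 0
  have hA : 0 < A := by
    obtain ⟨y, hy, hy_low, hy_up, hy_pos⟩ :=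
      ((eventually_mem_nhdsWithin (s := Ioi (0 : ℝ))).and
        (hlower.and (hupper.and hpos))).exists
    exact pos_of_mul_pos_left (hy_pos.trans_le (hy_low.trans hy_up)) (Real.rpow_nonneg hy.le _)
  have hlog_lower : ∀ᶠ y in 𝓝[>] 0,
      Real.log (c * y ^ γ) / Real.log (1 / y) ≤ Real.log (F y) / Real.log (1 / y) := by
    filter_upwards [hlower, hpos, hlog] with y hy_low hy_pos hy_log
    gcongr
  have hlog_upper : ∀ᶠ y in 𝓝[>] 0,
      Real.log (F y) / Real.log (1 / y) ≤ Real.log (A * y ^ (-β)) / Real.log (1 / y) := by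
    filter_upwards [hlower, hupper, hpos, hlog] with y hy_low hy_up hy_pos hy_log
    have := hy_pos.trans_le hy_low
    gcongr
  have hlim_lower := tendsto_log_mul_rpow_div_log_one_div hc (-γ)
  rw [neg_neg] at hlim_lower
  have hcobdd : IsCoboundedUnder (· ≤ ·) (𝓝[>] 0)
      fun y ↦ Real.log (F y) / Real.log (1 / y) :=
    (hlim_lower.isBoundedUnder_ge.mono_ge hlog_lower).isCoboundedUnder_le
  have hlim_upper := tendsto_log_mul_rpow_div_log_one_div hA β
  exact (limsup_le_limsup hlog_upper hcobdd hlim_upper.isBoundedUnder_le).trans_eq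
    hlim_upper.limsup_eq

end GrowthExponent

section HorizontalLines

lemma add_mul_I_mem_upperHalfPlaneSet (x : ℝ) {y : ℝ} (hy : 0 < y) :
    (x + y * I : ℂ) ∈ upperHalfPlaneSet := by
  simpa using hy

lemma continuous_comp_horizontal {X : Type*} [TopologicalSpace X] {F : ℂ → X}
    (hF : ContinuousOn F upperHalfPlaneSet) {y : ℝ} (hy : 0 < y) :
    Continuous fun x : ℝ ↦ F (x + y * I) :=
  hF.comp_continuous (by fun_prop) fun x ↦ add_mul_I_mem_upperHalfPlaneSet x hy

lemma hasDerivAt_integral_horizontal {E : Type*} [NormedAddCommGroup E] [NormedSpace ℝ E]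
    {F F' : ℂ → E} (hF : ContinuousOn F upperHalfPlaneSet)
    (hF' : ContinuousOn F' upperHalfPlaneSet)
    (hderiv : ∀ x y : ℝ, 0 < y → HasDerivAt (fun t : ℝ ↦ F (x + t * I)) (F' (x + y * I)) y)
    (a b : ℝ) {y : ℝ} (hy : 0 < y) :
    HasDerivAt (fun t : ℝ ↦ ∫ x in a..b, F (x + t * I)) (∫ x in a..b, F' (x + y * I)) y := by
  have hIcc_pos {t : ℝ} (ht : t ∈ Icc (y / 2) (2 * y)) : 0 < t := (half_pos hy).trans_le ht.1
  have hcont : ContinuousOn (fun q : ℝ × ℝ ↦ F' (q.1 + q.2 * I))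
      (uIcc a b ×ˢ Icc (y / 2) (2 * y)) :=
    hF'.comp (by fun_prop) fun q hq ↦ add_mul_I_mem_upperHalfPlaneSet q.1 (hIcc_pos hq.2)
  obtain ⟨C, hC⟩ := (isCompact_uIcc.prod isCompact_Icc).exists_bound_of_continuousOn hcont
  refine (intervalIntegral.hasDerivAt_integral_of_dominated_loc_of_deriv_le
    (F := fun (t x : ℝ) ↦ F (x + t * I)) (F' := fun (t x : ℝ) ↦ F' (x + t * I))
    (bound := fun _ ↦ C) (Icc_mem_nhds (by linarith) (by linarith)) ?_
    ((continuous_comp_horizontal hF hy).intervalIntegrable _ _)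
    (continuous_comp_horizontal hF' hy).aestronglyMeasurable
    (ae_of_all _ fun x hx t ht ↦ hC (x, t) ⟨uIoc_subset_uIcc hx, ht⟩)
    intervalIntegrable_const
    (ae_of_all _ fun x _ t ht ↦ hderiv x t (hIcc_pos ht))).2
  filter_upwards [lt_mem_nhds hy] with t ht
  exact (continuous_comp_horizontal hF ht).aestronglyMeasurable

end HorizontalLines

section ExpRe

variable {h h₁ : ℂ → ℂ} {h' h₁' : ℂ} {x y : ℝ}

lemma hasDerivAt_horizontal (hh : HasDerivAt h h' (x + y * I)) :
    HasDerivAt (fun s : ℝ ↦ h (s + y * I)) h' x :=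
  (hh.comp_add_const _ _).comp_ofReal

lemma hasDerivAt_vertical (hh : HasDerivAt h h' (x + y * I)) :
    HasDerivAt (fun t : ℝ ↦ h (x + t * I)) (h' * I) y := by
  have hline : HasDerivAt (fun w : ℂ ↦ x + w * I) I y := by
    simpa using ((hasDerivAt_id (y : ℂ)).mul_const I).const_add (x : ℂ)
  exact (hh.comp (y : ℂ) hline).comp_ofReal

lemma hasDerivAt_re {u : ℝ → ℂ} {u' : ℂ} {t : ℝ} (hu : HasDerivAt u u' t) :
    HasDerivAt (fun s ↦ (u s).re) u'.re t :=
  reCLM.hasFDerivAt.comp_hasDerivAt t hu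

lemma hasDerivAt_im {u : ℝ → ℂ} {u' : ℂ} {t : ℝ} (hu : HasDerivAt u u' t) :
    HasDerivAt (fun s ↦ (u s).im) u'.im t :=
  imCLM.hasFDerivAt.comp_hasDerivAt t hu

lemma hasDerivAt_exp_re_vertical (hh : HasDerivAt h h' (x + y * I)) :
    HasDerivAt (fun t : ℝ ↦ Real.exp (h (x + t * I)).re)
      (-(Real.exp (h (x + y * I)).re * h'.im)) y := by
  refine (hasDerivAt_re (hasDerivAt_vertical hh)).exp.congr_deriv ?_
  rw [mul_I_re, mul_neg]

lemma hasDerivAt_exp_re_mul_im_vertical (hh : HasDerivAt h (h₁ (x + y * I)) (x + y * I))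
    (hh₁ : HasDerivAt h₁ h₁' (x + y * I)) :
    HasDerivAt (fun t : ℝ ↦ Real.exp (h (x + t * I)).re * (h₁ (x + t * I)).im)
      (Real.exp (h (x + y * I)).re * (h₁'.re - (h₁ (x + y * I)).im ^ 2)) y := by
  refine ((hasDerivAt_exp_re_vertical hh).mul
    (hasDerivAt_im (hasDerivAt_vertical hh₁))).congr_deriv ?_
  rw [mul_I_im]
  ring

lemma hasDerivAt_exp_re_mul_re_horizontal (hh : HasDerivAt h (h₁ (x + y * I)) (x + y * I))
    (hh₁ : HasDerivAt h₁ h₁' (x + y * I)) :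
    HasDerivAt (fun s : ℝ ↦ Real.exp (h (s + y * I)).re * (h₁ (s + y * I)).re)
      (Real.exp (h (x + y * I)).re * (h₁'.re + (h₁ (x + y * I)).re ^ 2)) x := by
  refine ((hasDerivAt_re (hasDerivAt_horizontal hh)).exp.mul
    (hasDerivAt_re (hasDerivAt_horizontal hh₁))).congr_deriv ?_
  ring

end ExpRe

section HardyIdentity

lemma deriv_add_const_eq_of_isOpen {𝕜 E : Type*} [NontriviallyNormedField 𝕜]
    [NormedAddCommGroup E] [NormedSpace 𝕜 E] {f : 𝕜 → E} {s : Set 𝕜} (hs : IsOpen s) {c : 𝕜}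
    (hper : ∀ z ∈ s, f (z + c) = f z) {z : 𝕜} (hz : z ∈ s) : deriv f (z + c) = deriv f z := by
  rw [← deriv_comp_add_const]
  exact EventuallyEq.deriv_eq (eventually_of_mem (hs.mem_nhds hz) hper)

variable {h : ℂ → ℂ} {y : ℝ}

lemma hasDerivAt_add_mul_I_of_differentiableOn
    (hh : DifferentiableOn ℂ h upperHalfPlaneSet) (x : ℝ) (hy : 0 < y) :
    HasDerivAt h (deriv h (x + y * I)) (x + y * I) :=
  hh.hasDerivAt (isOpen_upperHalfPlaneSet.mem_nhds (add_mul_I_mem_upperHalfPlaneSet x hy))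

lemma hasDerivAt_integral_exp_re (hh : DifferentiableOn ℂ h upperHalfPlaneSet) (a b : ℝ)
    (hy : 0 < y) :
    HasDerivAt (fun t : ℝ ↦ ∫ x in a..b, Real.exp (h (x + t * I)).re)
      (-∫ x in a..b, Real.exp (h (x + y * I)).re * (deriv h (x + y * I)).im) y := by
  have hh_cont := hh.continuousOn
  have hh₁_cont := (hh.deriv isOpen_upperHalfPlaneSet).continuousOn
  rw [← intervalIntegral.integral_neg]
  refine hasDerivAt_integral_horizontal (F := fun z ↦ Real.exp (h z).re)
    (F' := fun z ↦ -(Real.exp (h z).re * (deriv h z).im)) (by fun_prop) (by fun_prop)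
    (fun x t ht ↦ ?_) a b hy
  exact hasDerivAt_exp_re_vertical (hasDerivAt_add_mul_I_of_differentiableOn hh x ht)

lemma integral_exp_re_mul_re_deriv2_add_sq_eq_zero
    (hh : DifferentiableOn ℂ h upperHalfPlaneSet) {T : ℝ}
    (hper : ∀ z ∈ upperHalfPlaneSet, h (z + T) = h z) (hy : 0 < y) :
    ∫ x in (0 : ℝ)..T, Real.exp (h (x + y * I)).re *
      ((deriv (deriv h) (x + y * I)).re + (deriv h (x + y * I)).re ^ 2) = 0 := by
  have hh₁ := hh.deriv isOpen_upperHalfPlaneSet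
  have hh_cont := hh.continuousOn
  have hh₁_cont := hh₁.continuousOn
  have hh₂_cont := (hh₁.deriv isOpen_upperHalfPlaneSet).continuousOn
  have hcont : ContinuousOn (fun z ↦ Real.exp (h z).re *
      ((deriv (deriv h) z).re + (deriv h z).re ^ 2)) upperHalfPlaneSet := by fun_prop
  have h0 := add_mul_I_mem_upperHalfPlaneSet 0 hy
  have hshift : (T + y * I : ℂ) = ((0 : ℝ) + y * I) + T := by rw [ofReal_zero]; ring
  rw [intervalIntegral.integral_eq_sub_of_hasDerivAt
      (fun x _ ↦ hasDerivAt_exp_re_mul_re_horizontal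
        (hasDerivAt_add_mul_I_of_differentiableOn hh x hy)
        (hasDerivAt_add_mul_I_of_differentiableOn hh₁ x hy))
      ((continuous_comp_horizontal hcont hy).intervalIntegrable _ _),
    hshift, hper _ h0, deriv_add_const_eq_of_isOpen isOpen_upperHalfPlaneSet hper h0, sub_self]

/- With `φ = exp (Re h)`, the Cauchy–Riemann equations give
`∂_y (φ Im h') = ∂_x (φ Re h') - φ |h'|²`, and the `x`-derivative integrates to zero over a
period. -/
theorem hasDerivAt_integral_exp_re_mul_im_deriv (hh : DifferentiableOn ℂ h upperHalfPlaneSet)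
    {T : ℝ} (hper : ∀ z ∈ upperHalfPlaneSet, h (z + T) = h z) (hy : 0 < y) :
    HasDerivAt (fun t : ℝ ↦ ∫ x in (0 : ℝ)..T,
        Real.exp (h (x + t * I)).re * (deriv h (x + t * I)).im)
      (-∫ x in (0 : ℝ)..T, Real.exp (h (x + y * I)).re * ‖deriv h (x + y * I)‖ ^ 2) y := by
  have hh₁ := hh.deriv isOpen_upperHalfPlaneSet
  have hh_cont := hh.continuousOn
  have hh₁_cont := hh₁.continuousOn
  have hh₂_cont := (hh₁.deriv isOpen_upperHalfPlaneSet).continuousOn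
  let V (z : ℂ) : ℝ := Real.exp (h z).re * ((deriv (deriv h) z).re - (deriv h z).im ^ 2)
  let W (z : ℂ) : ℝ := Real.exp (h z).re * ((deriv (deriv h) z).re + (deriv h z).re ^ 2)
  have hV : ContinuousOn V upperHalfPlaneSet := by fun_prop
  have hW : ContinuousOn W upperHalfPlaneSet := by fun_prop
  have hderiv : HasDerivAt (fun t : ℝ ↦ ∫ x in (0 : ℝ)..T,
      Real.exp (h (x + t * I)).re * (deriv h (x + t * I)).im)
      (∫ x in (0 : ℝ)..T, V (x + y * I)) y :=
    hasDerivAt_integral_horizontal (F := fun z ↦ Real.exp (h z).re * (deriv h z).im)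
      (by fun_prop) hV (fun x t ht ↦ hasDerivAt_exp_re_mul_im_vertical
        (hasDerivAt_add_mul_I_of_differentiableOn hh x ht)
        (hasDerivAt_add_mul_I_of_differentiableOn hh₁ x ht)) 0 T hy
  have hW_integral : ∫ x in (0 : ℝ)..T, W (x + y * I) = 0 :=
    integral_exp_re_mul_re_deriv2_add_sq_eq_zero hh hper hy
  refine hderiv.congr_deriv ?_
  calc ∫ x in (0 : ℝ)..T, V (x + y * I)
      = (∫ x in (0 : ℝ)..T, V (x + y * I)) - ∫ x in (0 : ℝ)..T, W (x + y * I) := by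
        rw [hW_integral, sub_zero]
    _ = ∫ x in (0 : ℝ)..T, (V (x + y * I) - W (x + y * I)) :=
        (intervalIntegral.integral_sub
          ((continuous_comp_horizontal hV hy).intervalIntegrable _ _)
          ((continuous_comp_horizontal hW hy).intervalIntegrable _ _)).symm
    _ = -∫ x in (0 : ℝ)..T, Real.exp (h (x + y * I)).re * ‖deriv h (x + y * I)‖ ^ 2 := by
        rw [← intervalIntegral.integral_neg]
        congr! 2
        rw [Complex.sq_norm, normSq_apply]
        ring

end HardyIdentity

section IntegralMeans

variable {g : ℂ → ℂ} {p : ℂ} {y : ℝ}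

lemma continuous_integrand_Ip (hg : DifferentiableOn ℂ g upperHalfPlaneSet) (hy : 0 < y) :
    Continuous fun x : ℝ ↦ Real.exp (p * g (x + y * I)).re := by
  have hpg := continuous_comp_horizontal (hg.continuousOn.const_mul p) hy
  exact Real.continuous_exp.comp (continuous_re.comp hpg)

lemma Ip_pos (hg : DifferentiableOn ℂ g upperHalfPlaneSet) (hy : 0 < y) : 0 < Ip g p y :=
  intervalIntegral.intervalIntegral_pos_of_pos
    ((continuous_integrand_Ip hg hy).intervalIntegrable _ _) (fun _ ↦ Real.exp_pos _) one_pos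

lemma integral_exp_re_mul_le_mul_Ip (hg : DifferentiableOn ℂ g upperHalfPlaneSet) (hy : 0 < y)
    {w : ℝ → ℝ} {C : ℝ} (hw : Continuous w) (hwC : ∀ x, w x ≤ C) :
    ∫ x in (0 : ℝ)..1, Real.exp (p * g (x + y * I)).re * w x ≤ C * Ip g p y := by
  have hcont := continuous_integrand_Ip (p := p) hg hy
  rw [mul_comm C, Ip, ← intervalIntegral.integral_mul_const]
  refine intervalIntegral.integral_mono zero_le_one ((hcont.mul hw).intervalIntegrable _ _)
    ((hcont.mul_const C).intervalIntegrable _ _) fun x ↦ ?_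
  exact mul_le_mul_of_nonneg_left (hwC x) (Real.exp_pos _).le

lemma hasDerivAt_Ip (hg : DifferentiableOn ℂ g upperHalfPlaneSet) (hy : 0 < y) :
    HasDerivAt (Ip g p) (Ip' g p y) y := by
  simpa only [deriv_const_mul_field] using! hasDerivAt_integral_exp_re (hg.const_mul p) 0 1 hy

lemma hasDerivAt_Ip' (hg : DifferentiableOn ℂ g upperHalfPlaneSet)
    (hper : ∀ z ∈ upperHalfPlaneSet, g (z + 1) = g z) (hy : 0 < y) :
    HasDerivAt (Ip' g p) (Ip'' g p y) y := by
  have hper_p : ∀ z ∈ upperHalfPlaneSet, p * g (z + (1 : ℝ)) = p * g z := fun z hz ↦ by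
    rw [ofReal_one, hper z hz]
  have hderiv := (hasDerivAt_integral_exp_re_mul_im_deriv (hg.const_mul p) hper_p hy).neg
  simp only [deriv_const_mul_field', neg_neg] at hderiv
  refine hderiv.congr_deriv ?_
  rw [Ip'', ← intervalIntegral.integral_const_mul]
  congr! 2
  rw [norm_mul]
  ring

lemma mul_Ip'_le {β₀ : ℝ} (hg : DifferentiableOn ℂ g upperHalfPlaneSet) (hy : 0 < y)
    (hbloch : ∀ x : ℝ, 2 * y * ‖deriv g (x + y * I)‖ ≤ β₀) :
    y * Ip' g p y ≤ ‖p‖ * β₀ / 2 * Ip g p y := by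
  have hg₁ := continuous_comp_horizontal (hg.deriv isOpen_upperHalfPlaneSet).continuousOn hy
  have hbound (x : ℝ) : -(y * (p * deriv g (x + y * I)).im) ≤ ‖p‖ * β₀ / 2 := by
    calc -(y * (p * deriv g (x + y * I)).im)
        = y * -(p * deriv g (x + y * I)).im := (mul_neg _ _).symm
      _ ≤ y * ‖p * deriv g (x + y * I)‖ := by
          gcongr
          exact (neg_le_abs _).trans (abs_im_le_norm _)
      _ = ‖p‖ * (2 * y * ‖deriv g (x + y * I)‖) / 2 := by rw [norm_mul]; ring
      _ ≤ ‖p‖ * β₀ / 2 := by gcongr; exact hbloch x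
  refine Eq.trans_le ?_ (integral_exp_re_mul_le_mul_Ip hg hy (by fun_prop) hbound)
  rw [Ip', ← intervalIntegral.integral_neg, ← intervalIntegral.integral_const_mul]
  congr! 2
  ring

lemma sq_mul_Ip''_le {β₀ : ℝ} (hg : DifferentiableOn ℂ g upperHalfPlaneSet) (hy : 0 < y)
    (hbloch : ∀ x : ℝ, 2 * y * ‖deriv g (x + y * I)‖ ≤ β₀) :
    y ^ 2 * Ip'' g p y ≤ β₀ ^ 2 * ‖p‖ ^ 2 / 4 * Ip g p y := by
  have hg₁ := continuous_comp_horizontal (hg.deriv isOpen_upperHalfPlaneSet).continuousOn hy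
  have hbound (x : ℝ) :
      (2 * y * ‖deriv g (x + y * I)‖) ^ 2 * ‖p‖ ^ 2 / 4 ≤ β₀ ^ 2 * ‖p‖ ^ 2 / 4 := by
    gcongr
    exact hbloch x
  refine Eq.trans_le ?_ (integral_exp_re_mul_le_mul_Ip hg hy (by fun_prop) hbound)
  rw [Ip'', ← mul_assoc, ← intervalIntegral.integral_const_mul]
  congr! 2
  ring

end IntegralMeans

theorem stmt10_general (β₀ : ℝ) (g : ℂ → ℂ) (hg : DifferentiableOn ℂ g {z : ℂ | 0 < z.im})
    (hper : ∀ z : ℂ, 0 < z.im → g (z + 1) = g z)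
    (hbloch : ∀ z : ℂ, 0 < z.im → 2 * z.im * ‖deriv g z‖ ≤ β₀)
    (p : ℂ) (β : ℝ) (hβ : 0 ≤ β) (hβeq : β ^ 2 + β = β₀ ^ 2 * ‖p‖ ^ 2 / 4) :
    limsup (fun y : ℝ ↦ Real.log (Ip g p y) / Real.log (1 / y)) (𝓝[>] (0 : ℝ)) ≤ β ∧
    limsup (fun y : ℝ ↦ Real.log (Ip g p y) / Real.log (1 / y)) (𝓝[>] (0 : ℝ)) ≤
      β₀ ^ 2 * ‖p‖ ^ 2 / 4 := by
  have hbloch_line (y : ℝ) (hy : 0 < y) (x : ℝ) : 2 * y * ‖deriv g (x + y * I)‖ ≤ β₀ := by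
    simpa using hbloch (x + y * I) (add_mul_I_mem_upperHalfPlaneSet x hy)
  have hIp (y : ℝ) (hy : y ∈ Ioc (0 : ℝ) 1) : HasDerivAt (Ip g p) (Ip' g p y) y :=
    hasDerivAt_Ip hg hy.1
  obtain ⟨A, hA⟩ := exists_le_mul_rpow_neg_of_sq_mul_deriv2_le (by linarith) hIp
    (fun y hy ↦ hasDerivAt_Ip' hg hper hy.1)
    (fun y hy ↦ hβeq ▸ sq_mul_Ip''_le hg hy.1 (hbloch_line y hy.1))
  have hlower (y : ℝ) (hy : y ∈ Ioc (0 : ℝ) 1) :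
      Ip g p 1 * y ^ (‖p‖ * β₀ / 2) ≤ Ip g p y :=
    mul_rpow_le_of_mul_deriv_le hIp (fun y hy ↦ mul_Ip'_le hg hy.1 (hbloch_line y hy.1)) hy
  have hnhds : Ioc (0 : ℝ) 1 ∈ 𝓝[>] (0 : ℝ) := Ioc_mem_nhdsGT one_pos
  have hlimsup := limsup_log_div_log_one_div_le (Ip_pos hg one_pos)
    (eventually_of_mem hnhds hlower) (eventually_of_mem hnhds hA)
  exact ⟨hlimsup, hlimsup.trans (by linarith [sq_nonneg β])⟩

theorem stmt10 (β₀ : ℝ) (hβ₀ : 0 < β₀) (g : ℂ → ℂ)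
    (hg : DifferentiableOn ℂ g {z : ℂ | 0 < z.im})
    (hper : ∀ z : ℂ, 0 < z.im → g (z + 1) = g z)
    (hbloch : ∀ z : ℂ, 0 < z.im → 2 * z.im * ‖deriv g z‖ ≤ β₀)
    (hdecay : ∀ ε : ℝ, 0 < ε → ∃ Y : ℝ, ∀ x y : ℝ, Y ≤ y →
      ‖g ((x : ℂ) + (y : ℂ) * Complex.I)‖ < ε)
    (p : ℂ) (hp : p ≠ 0)
    (β : ℝ) (hβ : 0 < β) (hβeq : β^2 + β = β₀^2 * ‖p‖^2 / 4) :
    Filter.limsup (fun y : ℝ => Real.log (Ip g p y) / Real.log (1 / y)) (𝓝[>] (0:ℝ)) ≤ β ∧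
    Filter.limsup (fun y : ℝ => Real.log (Ip g p y) / Real.log (1 / y)) (𝓝[>] (0:ℝ)) ≤
      β₀^2 * ‖p‖^2 / 4 := by
  exact stmt10_general β₀ g hg hper hbloch p β hβ.le hβeq
end

section
/- Under the hypotheses that g is holomorphic on the upper half-plane ℍ, g(z+1) = g(z) for all z ∈ ℍ, sup_{z∈ℍ} 2 Im(z)|g'(z)| ≤ β₀ < ∞, and g(x+iy) → 0 uniformly in x as y → ∞, the function I_p(y) := ∫₀¹ exp( Re(p·g(x+iy)) ) dx satisfies I_p'(y) ≤ 0 for all y > 0; that is, I_p is non-increasing on (0, ∞), for every p ∈ ℂ. -/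
open Complex MeasureTheory Filter Topology Set

/-!
A periodic function `u` on the upper half-plane that is bounded at `i∞` is `F(exp(2πiz/h))` with
`F` holomorphic in the unit disk, the singularity at the cusp `0` being removable. The mean of `‖u‖`
over a period at height `y` is then the mean of `‖F‖` over the circle of radius `exp(-2πy/h)`, and
by Poisson's formula the means of `‖F‖` over concentric circles grow with the radius. The integral
means `I_p` are the case `u = exp(p·g)`, since `‖exp(p·g)‖ = exp(Re(p·g))`.
-/

open Metric Real Function.Periodic
open UpperHalfPlane (upperHalfPlaneSet isOpen_upperHalfPlaneSet)

section CircleAverage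

variable {E : Type*} [NormedAddCommGroup E] {c : ℂ} {r R : ℝ}

theorem norm_circleAverage_le_circleAverage_norm [NormedSpace ℝ E] (f : ℂ → E) (c : ℂ) (R : ℝ) :
    ‖circleAverage f c R‖ ≤ circleAverage (fun z ↦ ‖f z‖) c R := by
  rw [circleAverage_def, circleAverage_def, norm_smul, smul_eq_mul,
    Real.norm_of_nonneg (by positivity)]
  gcongr
  exact intervalIntegral.norm_integral_le_integral_norm two_pi_pos.le

section DoubleAverage

variable {d : ℂ}

theorem continuous_uncurry_circleMap_circleMap {X : Type*} [TopologicalSpace X] {F : ℂ → ℂ → X}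
    (hF : ContinuousOn (Function.uncurry F) (sphere c |r| ×ˢ sphere d |R|)) :
    Continuous (Function.uncurry fun θ φ : ℝ ↦ F (circleMap c r θ) (circleMap d R φ)) :=
  hF.comp_continuous (f := fun q : ℝ × ℝ ↦ (circleMap c r q.1, circleMap d R q.2)) (by fun_prop)
    fun q ↦ ⟨circleMap_mem_sphere' c r q.1, circleMap_mem_sphere' d R q.2⟩

variable [NormedSpace ℝ E] {F : ℂ → ℂ → E}

theorem circleIntegrable_circleAverage
    (hF : ContinuousOn (Function.uncurry F) (sphere c |r| ×ˢ sphere d |R|)) :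
    CircleIntegrable (fun w ↦ circleAverage (F w) d R) c r :=
  ((intervalIntegral.continuous_parametric_intervalIntegral_of_continuous'
    (continuous_uncurry_circleMap_circleMap hF) 0 (2 * π)).const_smul _).intervalIntegrable _ _

theorem circleAverage_circleAverage_swap
    (hF : ContinuousOn (Function.uncurry F) (sphere c |r| ×ˢ sphere d |R|)) :
    circleAverage (fun w ↦ circleAverage (F w) d R) c r =
      circleAverage (fun z ↦ circleAverage (F · z) c r) d R := by
  simp only [circleAverage_def, intervalIntegral.integral_smul]
  rw [intervalIntegral_intervalIntegral_swap]
  exact ((continuous_uncurry_circleMap_circleMap hF).continuousOn.integrableOn_compact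
    (isCompact_uIcc.prod isCompact_uIcc)).mono_set
    (prod_mono uIoc_subset_uIcc uIoc_subset_uIcc)

end DoubleAverage

theorem continuousOn_uncurry_poissonKernel (c : ℂ) :
    ContinuousOn (Function.uncurry (poissonKernel c)) {q | q.1 ≠ q.2} := by
  simp only [Function.uncurry_def, poissonKernel_def]
  refine ContinuousOn.div (by fun_prop) (by fun_prop) fun q hq ↦ ?_
  simpa [sub_eq_zero] using hq.symm

theorem poissonKernel_nonneg {w z : ℂ} (h : ‖w - c‖ ≤ ‖z - c‖) : 0 ≤ poissonKernel c w z := by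
  rw [poissonKernel_def]
  have : ‖w - c‖ ^ 2 ≤ ‖z - c‖ ^ 2 := by gcongr
  exact div_nonneg (sub_nonneg.2 this) (by positivity)

-- The kernel is harmonic in its pole `w` too, so its mean is its value `1` at `w = c`.
theorem circleAverage_poissonKernel_left {z : ℂ} (hz : |r| < ‖z - c‖) :
    circleAverage (poissonKernel c · z) c r = 1 := by
  have hne : z - c ≠ 0 := norm_pos_iff.1 ((abs_nonneg r).trans_lt hz)
  have hdiff : DifferentiableOn ℂ (herglotzRieszKernel c · z) (closedBall c |r|) := by
    simp only [herglotzRieszKernel_def]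
    refine DifferentiableOn.div (by fun_prop) (by fun_prop) fun w hw h ↦ ?_
    rw [sub_eq_zero.1 h] at hz
    exact hz.not_ge (mem_closedBall_iff_norm.1 hw)
  have hint : CircleIntegrable (herglotzRieszKernel c · z) c r :=
    (hdiff.continuousOn.mono sphere_subset_closedBall).circleIntegrable'
  calc circleAverage (poissonKernel c · z) c r
      = circleAverage (reCLM ∘ (herglotzRieszKernel c · z)) c r := by
        simp only [poissonKernel_eq_re_herglotzRieszKernel]; rfl
    _ = (circleAverage (herglotzRieszKernel c · z) c r).re :=
        reCLM.circleAverage_comp_comm hint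
    _ = (herglotzRieszKernel c c z).re := by
        rw [(hdiff.diffContOnCl_ball subset_rfl).circleAverage]
    _ = 1 := by simp [herglotzRieszKernel_def, hne]

section PoissonIntegral

variable [NormedSpace ℝ E] {φ : ℂ → E}

theorem continuousOn_uncurry_poissonKernel_smul (hφ : ContinuousOn φ (sphere c |R|))
    (hr : |r| ≠ |R|) :
    ContinuousOn (Function.uncurry fun w z ↦ poissonKernel c w z • φ z)
      (sphere c |r| ×ˢ sphere c |R|) := by
  refine ((continuousOn_uncurry_poissonKernel c).mono ?_).smul
    (hφ.comp continuousOn_snd fun q hq ↦ hq.2)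
  rintro ⟨w, z⟩ ⟨hw, hz⟩ (rfl : w = z)
  exact hr ((mem_sphere.1 hw).symm.trans (mem_sphere.1 hz))

theorem circleAverage_circleAverage_poissonKernel_smul [CompleteSpace E]
    (hφ : ContinuousOn φ (sphere c |R|)) (hr : |r| < |R|) :
    circleAverage (fun w ↦ circleAverage (fun z ↦ poissonKernel c w z • φ z) c R) c r =
      circleAverage φ c R := by
  rw [circleAverage_circleAverage_swap (continuousOn_uncurry_poissonKernel_smul hφ hr.ne)]
  refine circleAverage_congr_sphere fun z hz ↦ ?_
  have hz' : |r| < ‖z - c‖ := by rwa [mem_sphere_iff_norm.1 hz]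
  calc circleAverage (fun w ↦ poissonKernel c w z • φ z) c r
      = circleAverage (poissonKernel c · z) c r • φ z := by
        simp only [circleAverage_def, intervalIntegral.integral_smul_const, smul_assoc]
    _ = φ z := by rw [circleAverage_poissonKernel_left hz', one_smul]

end PoissonIntegral

variable [NormedSpace ℂ E] [CompleteSpace E] {f : ℂ → E}

theorem norm_le_circleAverage_poissonKernel_smul_norm (hf : DiffContOnCl ℂ f (ball c R)) {w : ℂ}
    (hw : w ∈ ball c R) : ‖f w‖ ≤ circleAverage (fun z ↦ poissonKernel c w z • ‖f z‖) c R := by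
  have hR : |R| = R := abs_of_pos (pos_of_mem_ball hw)
  calc ‖f w‖ = ‖circleAverage (poissonKernel c w • f) c R‖ := by
        rw [hf.circleAverage_poissonKernel_smul hw]
    _ ≤ circleAverage (fun z ↦ ‖(poissonKernel c w • f) z‖) c R :=
        norm_circleAverage_le_circleAverage_norm _ c R
    _ = circleAverage (fun z ↦ poissonKernel c w z • ‖f z‖) c R := by
        refine circleAverage_congr_sphere fun z hz ↦ ?_
        have hwz : ‖w - c‖ ≤ ‖z - c‖ := by
          rw [mem_sphere_iff_norm.1 hz, hR]
          exact (mem_ball_iff_norm.1 hw).le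
        simp [norm_smul, abs_of_nonneg (poissonKernel_nonneg hwz)]

theorem circleAverage_norm_mono_radius (hf : DiffContOnCl ℂ f (ball c R)) (hr : |r| ≤ R) :
    circleAverage (fun z ↦ ‖f z‖) c r ≤ circleAverage (fun z ↦ ‖f z‖) c R := by
  rcases hr.eq_or_lt with rfl | hlt
  · rw [circleAverage_abs_radius]
  have hR : |R| = R := abs_of_pos ((abs_nonneg r).trans_lt hlt)
  have hsub : sphere c |r| ⊆ ball c R := sphere_subset_ball hlt
  have hnorm_r : ContinuousOn (fun z ↦ ‖f z‖) (sphere c |r|) :=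
    (hf.differentiableOn.continuousOn.mono hsub).norm
  have hnorm_R : ContinuousOn (fun z ↦ ‖f z‖) (sphere c |R|) := by
    rw [hR]
    exact (hf.continuousOn_ball.mono sphere_subset_closedBall).norm
  have hlt' : |r| < |R| := by rwa [hR]
  calc circleAverage (fun z ↦ ‖f z‖) c r
      ≤ circleAverage (fun w ↦ circleAverage (fun z ↦ poissonKernel c w z • ‖f z‖) c R) c r :=
        circleAverage_mono hnorm_r.circleIntegrable'
          (circleIntegrable_circleAverage
            (continuousOn_uncurry_poissonKernel_smul hnorm_R hlt'.ne))
          fun w hw ↦ norm_le_circleAverage_poissonKernel_smul_norm hf (hsub hw)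
    _ = circleAverage (fun z ↦ ‖f z‖) c R :=
        circleAverage_circleAverage_poissonKernel_smul hnorm_R hlt'

end CircleAverage

section Cusp

variable {h : ℝ} {u : ℂ → ℂ}

theorem integral_comp_qParam {E : Type*} [NormedAddCommGroup E] [NormedSpace ℝ E] (hh : h ≠ 0)
    (F : ℂ → E) (y : ℝ) :
    ∫ x in (0 : ℝ)..h, F (qParam h (x + y * I)) =
      h • circleAverage F 0 (Real.exp (-2 * π * y / h)) := by
  have hq : ∀ x : ℝ, qParam h (x + y * I) =
      circleMap 0 (Real.exp (-2 * π * y / h)) (2 * π / h * x) := fun x ↦ by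
    rw [qParam, circleMap_zero, Complex.ofReal_exp, ← Complex.exp_add]
    congr 1
    push_cast
    linear_combination (2 * π * y / h : ℂ) * I_mul_I
  simp only [hq]
  rw [intervalIntegral.integral_comp_mul_left
    (fun θ ↦ F (circleMap 0 (Real.exp (-2 * π * y / h)) θ)) (by positivity), circleAverage_def,
    smul_smul, mul_zero, div_mul_cancel₀ _ hh, inv_div, div_eq_mul_inv]

theorem differentiableOn_cuspFunction_ball (hh : 0 < h) (hper : Function.Periodic u h)
    (hu : DifferentiableOn ℂ u upperHalfPlaneSet) (hbdd : BoundedAtFilter (comap im atTop) u) :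
    DifferentiableOn ℂ (cuspFunction h u) (ball 0 1) := by
  have hdiff : ∀ z : ℂ, 0 < z.im → DifferentiableAt ℂ u z := fun z hz ↦
    hu.differentiableAt (isOpen_upperHalfPlaneSet.mem_nhds hz)
  intro q hq
  refine DifferentiableAt.differentiableWithinAt ?_
  rcases eq_or_ne q 0 with rfl | hq0
  · exact differentiableAt_cuspFunction_zero hh hper
      ((tendsto_comap.eventually_gt_atTop 0).mono hdiff) hbdd
  · rw [← qParam_right_inv hh.ne' hq0]
    refine differentiableAt_cuspFunction hh.ne' hper (hdiff _ ?_)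
    rw [← norm_qParam_lt_iff hh, qParam_right_inv hh.ne' hq0]
    simpa using hq

theorem antitoneOn_integral_norm_of_periodic (hh : 0 < h) (hper : Function.Periodic u h)
    (hu : DifferentiableOn ℂ u upperHalfPlaneSet) (hbdd : BoundedAtFilter (comap im atTop) u) :
    AntitoneOn (fun y : ℝ ↦ ∫ x in (0 : ℝ)..h, ‖u (x + y * I)‖) (Ioi 0) := by
  have hmean : ∀ y : ℝ, ∫ x in (0 : ℝ)..h, ‖u (x + y * I)‖ =
      h • circleAverage (fun q ↦ ‖cuspFunction h u q‖) 0 (Real.exp (-2 * π * y / h)) := fun y ↦ by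
    simp only [← integral_comp_qParam hh.ne', eq_cuspFunction hh.ne' hper]
  intro a ha b _ hab
  have hneg : -2 * π < 0 := by linarith [pi_pos]
  have hball : closedBall (0 : ℂ) (Real.exp (-2 * π * a / h)) ⊆ ball 0 1 := by
    refine closedBall_subset_ball (Real.exp_lt_one_iff.2 ?_)
    exact div_neg_of_neg_of_pos (mul_neg_of_neg_of_pos hneg ha) hh
  have hexp : Real.exp (-2 * π * b / h) ≤ Real.exp (-2 * π * a / h) := by
    refine Real.exp_le_exp.2 (div_le_div_of_nonneg_right ?_ hh.le)
    exact mul_le_mul_of_nonpos_left hab hneg.le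
  simp only [hmean]
  refine smul_le_smul_of_nonneg_left (circleAverage_norm_mono_radius ?_ ?_) hh.le
  · exact (differentiableOn_cuspFunction_ball hh hper hu hbdd).diffContOnCl_ball hball
  · rwa [Real.abs_exp]

-- The lemmas on `cuspFunction` ask for periodicity on all of `ℂ`, not only on the half-plane.
theorem periodic_indicator_upperHalfPlaneSet (hper : ∀ z ∈ upperHalfPlaneSet, u (z + h) = u z) :
    Function.Periodic (upperHalfPlaneSet.indicator u) h := fun z ↦ by
  have hmem : z + h ∈ upperHalfPlaneSet ↔ z ∈ upperHalfPlaneSet := by simp [upperHalfPlaneSet]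
  by_cases hz : z ∈ upperHalfPlaneSet
  · rw [indicator_of_mem (hmem.2 hz), indicator_of_mem hz, hper z hz]
  · rw [indicator_of_notMem (mt hmem.1 hz), indicator_of_notMem hz]

theorem antitoneOn_integral_norm (hh : 0 < h) (hper : ∀ z ∈ upperHalfPlaneSet, u (z + h) = u z)
    (hu : DifferentiableOn ℂ u upperHalfPlaneSet) (hbdd : BoundedAtFilter (comap im atTop) u) :
    AntitoneOn (fun y : ℝ ↦ ∫ x in (0 : ℝ)..h, ‖u (x + y * I)‖) (Ioi 0) := by
  have heq : EqOn (upperHalfPlaneSet.indicator u) u upperHalfPlaneSet := eqOn_indicator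
  have hev : ∀ᶠ z in comap im atTop, z ∈ upperHalfPlaneSet := tendsto_comap.eventually_gt_atTop 0
  refine (antitoneOn_integral_norm_of_periodic hh (periodic_indicator_upperHalfPlaneSet hper)
    (hu.congr heq) (hbdd.congr' ?_ .rfl)).congr fun y hy ↦ ?_
  · exact hev.mono fun z hz ↦ (heq hz).symm
  · refine intervalIntegral.integral_congr fun x _ ↦ ?_
    have hz : (x + y * I : ℂ) ∈ upperHalfPlaneSet := by simpa [upperHalfPlaneSet] using hy
    simp only [heq hz]

end Cusp

theorem boundedAtFilter_cexp {α : Type*} {l : Filter α} {f : α → ℂ} (hf : BoundedAtFilter l f) :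
    BoundedAtFilter l fun x ↦ cexp (f x) := by
  obtain ⟨M, hM⟩ := hf.bound
  refine .of_bound (Real.exp M) (hM.mono fun x hx ↦ ?_)
  calc ‖cexp (f x)‖ ≤ Real.exp ‖f x‖ := norm_exp_le_exp_norm (f x)
    _ ≤ Real.exp M * ‖(1 : α → ℝ) x‖ := by simpa using hx

theorem zeroAtFilter_comap_im_of_forall_norm_lt {E : Type*} [NormedAddCommGroup E] {f : ℂ → E}
    (hf : ∀ ε : ℝ, 0 < ε → ∃ Y : ℝ, ∀ x y : ℝ, Y ≤ y → ‖f ((x : ℂ) + (y : ℂ) * I)‖ < ε) :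
    ZeroAtFilter (comap im atTop) f := by
  refine Metric.tendsto_nhds.2 fun ε hε ↦ ?_
  obtain ⟨Y, hY⟩ := hf ε hε
  filter_upwards [tendsto_comap.eventually_ge_atTop Y] with z hz
  simpa only [re_add_im, dist_zero_right] using hY z.re z.im hz

theorem stmt11_general (g : ℂ → ℂ)
    (hg : DifferentiableOn ℂ g {z : ℂ | 0 < z.im})
    (hper : ∀ z : ℂ, 0 < z.im → g (z + 1) = g z)
    (hbdd : BoundedAtFilter (comap im atTop) g)
    (p : ℂ) :
    (∀ y : ℝ, 0 < y → deriv (Ip g p) y ≤ 0) ∧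
    AntitoneOn (Ip g p) (Set.Ioi 0) := by
  have hIp : Ip g p = fun y : ℝ ↦ ∫ x in (0 : ℝ)..1, ‖cexp (p * g (x + y * I))‖ := by
    funext y
    simp only [Ip, Complex.norm_exp]
  have hanti : AntitoneOn (Ip g p) (Ioi 0) := by
    rw [hIp]
    refine antitoneOn_integral_norm (u := fun z ↦ cexp (p * g z)) one_pos (fun z hz ↦ ?_)
      (hg.const_mul p).cexp (boundedAtFilter_cexp (hbdd.smul p))
    rw [ofReal_one, hper z hz]
  refine ⟨fun y hy ↦ ?_, hanti⟩
  rw [← derivWithin_of_isOpen isOpen_Ioi (mem_Ioi.2 hy)]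
  exact hanti.derivWithin_nonpos

theorem stmt11 (β₀ : ℝ) (g : ℂ → ℂ)
    (hg : DifferentiableOn ℂ g {z : ℂ | 0 < z.im})
    (hper : ∀ z : ℂ, 0 < z.im → g (z + 1) = g z)
    (hbloch : ∀ z : ℂ, 0 < z.im → 2 * z.im * ‖deriv g z‖ ≤ β₀)
    (hdecay : ∀ ε : ℝ, 0 < ε → ∃ Y : ℝ, ∀ x y : ℝ, Y ≤ y →
      ‖g ((x : ℂ) + (y : ℂ) * Complex.I)‖ < ε)
    (p : ℂ) :
    (∀ y : ℝ, 0 < y → deriv (Ip g p) y ≤ 0) ∧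
    AntitoneOn (Ip g p) (Set.Ioi 0) :=
  stmt11_general g hg hper (zeroAtFilter_comap_im_of_forall_norm_lt hdecay).boundedAtFilter p
end

section
/- Let μ : ℂ → ℂ be measurable, vanishing outside the lower half-plane {ζ : Im ζ < 0}, with |μ| ≤ 1 a.e., and let M > 0. Suppose that for every y > 0, the one-dimensional Lebesgue measure of the set {x ∈ ℝ : μ(x − iy) ≠ 0} is at most M. Then for every y > 0, ∫_ℝ y·|Tμ(x+iy)| dx ≤ (8/π)·M. -/
open Complex MeasureTheory Filter Topology Set

/-- The derivative of the Beurling transform of `μ`: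
`Tμ(z) = -(2/π) ∫_{Im ζ < 0} μ(ζ)/(ζ−z)³ dA(ζ)`. -/
noncomputable def Tderiv (μ : ℂ → ℂ) (z : ℂ) : ℂ :=
  -(2 / (Real.pi : ℂ)) * ∫ ζ in {ζ : ℂ | ζ.im < 0}, μ ζ / (ζ - z)^3

/-- The modified Beurling transform
`S^#μ(z) = -(1/π) ∫_{Im ζ<0} μ(ζ)[(ζ−z)⁻² − ζ⁻²] dA(ζ)`. -/
noncomputable def Ssharp (μ : ℂ → ℂ) (z : ℂ) : ℂ :=
  -(1 / (Real.pi : ℂ)) * ∫ ζ in {ζ : ℂ | ζ.im < 0}, μ ζ * (((ζ - z)^2)⁻¹ - (ζ^2)⁻¹)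

/-- The asymptotic variance over `[0,1]` of a function on the upper half-plane:
`σ²_{[0,1]}(b) = limsup_{y→0⁺} (1/log(1/y)) ∫₀¹ |b(x+iy)|² dx`. -/
noncomputable def sigma01 (b : ℂ → ℂ) : ℝ :=
  Filter.limsup (fun y : ℝ =>
    (1 / Real.log (1 / y)) *
      ∫ x in (0:ℝ)..1, ‖b ((x : ℂ) + (y : ℂ) * Complex.I)‖^2) (𝓝[>] (0:ℝ))

/-- `Σ²_ℍ`: the supremum of `σ²_{[0,1]}(S^#μ)` over all measurable `μ` with
`|μ| ≤ 1` a.e. supported in the lower half-plane. -/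
noncomputable def SigmaSqH : ℝ :=
  sSup {v : ℝ | ∃ μ : ℂ → ℂ, Measurable μ ∧ (∀ᵐ ζ : ℂ, ‖μ ζ‖ ≤ 1) ∧
    (∀ ζ : ℂ, 0 ≤ ζ.im → μ ζ = 0) ∧ v = sigma01 (Ssharp μ)}

/-
Take absolute values inside the integral defining `Tμ` and integrate over the line `Im z = y` first.
By Tonelli a point `ζ` with `Im ζ = -t` contributes `∫ |ζ - x - iy|⁻³ dx = 2 / (y + t)²`, so
`∫ y |Tμ(x + iy)| dx ≤ (4/π) ∫₀^∞ y (y + t)⁻² ‖μ(· - it)‖_{L¹} dt`.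
Here `t ↦ y (y + t)⁻²` is a probability density on `(0, ∞)`, so a bound `M` on the `L¹` norms of the
slices of `μ` gives `(4/π) M`. When `|μ| ≤ 1`, almost every slice has `L¹` norm at most the length
of its support.
-/

theorem hasDerivAt_sin_arctan (u : ℝ) :
    HasDerivAt (fun u : ℝ => Real.sin (Real.arctan u)) ((√(1 + u ^ 2) ^ 3)⁻¹) u := by
  refine (Real.hasDerivAt_arctan u).sin.congr_deriv ?_
  rw [Real.cos_arctan, one_div_mul_one_div, one_div, pow_succ' _ 2, Real.sq_sqrt (by positivity)]

theorem integrable_inv_sqrt_one_add_sq_pow_three :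
    Integrable fun u : ℝ => (√(1 + u ^ 2) ^ 3)⁻¹ := by
  refine integrable_inv_one_add_sq.mono' (by fun_prop) (Eventually.of_forall fun u => ?_)
  have one_le_sqrt : 1 ≤ √(1 + u ^ 2) := Real.one_le_sqrt.2 (by nlinarith [sq_nonneg u])
  rw [Real.norm_of_nonneg (by positivity)]
  refine inv_anti₀ (by positivity) ?_
  calc 1 + u ^ 2 = √(1 + u ^ 2) ^ 2 := (Real.sq_sqrt (by positivity)).symm
    _ ≤ √(1 + u ^ 2) ^ 3 := pow_le_pow_right₀ one_le_sqrt (by norm_num)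

theorem integral_inv_sqrt_one_add_sq_pow_three :
    ∫ u : ℝ, (√(1 + u ^ 2) ^ 3)⁻¹ = 2 := by
  have tendsto_sin_arctan {l : Filter ℝ} {a : ℝ} (h : Tendsto Real.arctan l (𝓝 a)) :
      Tendsto (fun u => Real.sin (Real.arctan u)) l (𝓝 (Real.sin a)) :=
    (Real.continuous_sin.tendsto a).comp h
  rw [integral_of_hasDerivAt_of_tendsto hasDerivAt_sin_arctan
    integrable_inv_sqrt_one_add_sq_pow_three
    (tendsto_sin_arctan (Real.tendsto_arctan_atBot.mono_right nhdsWithin_le_nhds))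
    (tendsto_sin_arctan (Real.tendsto_arctan_atTop.mono_right nhdsWithin_le_nhds)),
    Real.sin_neg, Real.sin_pi_div_two]
  norm_num

theorem norm_eq_abs_im_mul_sqrt {w : ℂ} (hw : w.im ≠ 0) :
    ‖w‖ = |w.im| * √(1 + (w.re / w.im) ^ 2) := by
  rw [Complex.norm_eq_sqrt_sq_add_sq, ← Real.sqrt_sq_eq_abs, ← Real.sqrt_mul (sq_nonneg _)]
  congr 1
  field_simp
  ring

theorem lintegral_enorm_inv_sub_pow_three {ζ : ℂ} {y : ℝ} (hζ : ζ.im ≠ y) :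
    ∫⁻ x : ℝ, ‖((ζ - ((x : ℂ) + (y : ℂ) * Complex.I)) ^ 3)⁻¹‖ₑ
      = ENNReal.ofReal (2 / (ζ.im - y) ^ 2) := by
  set s := ζ.im - y
  have hs : s ≠ 0 := sub_ne_zero.2 hζ
  let k : ℝ → ℝ := fun u => (√(1 + u ^ 2) ^ 3)⁻¹
  have kernel_eq (x : ℝ) : ‖((ζ - ((x : ℂ) + (y : ℂ) * Complex.I)) ^ 3)⁻¹‖ₑ
      = ENNReal.ofReal ((|s| ^ 3)⁻¹ * k ((ζ.re - x) / s)) := by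
    have him : (ζ - ((x : ℂ) + (y : ℂ) * Complex.I)).im = s := by simp [s]
    have hre : (ζ - ((x : ℂ) + (y : ℂ) * Complex.I)).re = ζ.re - x := by simp
    rw [← ofReal_norm, norm_inv, norm_pow, norm_eq_abs_im_mul_sqrt (him ▸ hs), him, hre, mul_pow,
      mul_inv]
  have integrable_k : Integrable fun x : ℝ => (|s| ^ 3)⁻¹ * k ((ζ.re - x) / s) :=
    ((integrable_inv_sqrt_one_add_sq_pow_three.comp_div hs).comp_sub_left ζ.re).const_mul _
  have integral_k : ∫ x : ℝ, (|s| ^ 3)⁻¹ * k ((ζ.re - x) / s) = 2 / s ^ 2 := by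
    rw [integral_const_mul, integral_sub_left_eq_self (fun x : ℝ => k (x / s)),
      Measure.integral_comp_div k, integral_inv_sqrt_one_add_sq_pow_three, smul_eq_mul,
      ← sq_abs s]
    have : |s| ≠ 0 := abs_ne_zero.2 hs
    field_simp
  simp_rw [kernel_eq]
  rw [← ofReal_integral_eq_lintegral_ofReal integrable_k
    (Eventually.of_forall fun x => by positivity), integral_k]

theorem setLIntegral_Ioi_inv_add_sq {y : ℝ} (hy : 0 < y) :
    ∫⁻ t in Ioi (0 : ℝ), ENNReal.ofReal ((y + t) ^ 2)⁻¹ = ENNReal.ofReal y⁻¹ := by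
  have hderiv : ∀ t ∈ Ici (0 : ℝ), HasDerivAt (fun t : ℝ => -(y + t)⁻¹) ((y + t) ^ 2)⁻¹ t := by
    intro t ht
    have hne : y + t ≠ 0 := (add_pos_of_pos_of_nonneg hy ht).ne'
    refine (((hasDerivAt_id' t).const_add y).fun_inv hne).fun_neg.congr_deriv ?_
    rw [neg_div, neg_neg, one_div]
  have hlim : Tendsto (fun t : ℝ => -(y + t)⁻¹) atTop (𝓝 0) := by
    simpa using (tendsto_inv_atTop_zero.comp (tendsto_atTop_add_const_left _ y tendsto_id)).neg
  have hnonneg (t : ℝ) : 0 ≤ ((y + t) ^ 2)⁻¹ := by positivity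
  rw [← ofReal_integral_eq_lintegral_ofReal
      (integrableOn_Ioi_deriv_of_nonneg' hderiv (fun t _ => hnonneg t) hlim)
      (Eventually.of_forall hnonneg),
    integral_Ioi_of_hasDerivAt_of_nonneg' hderiv (fun t _ => hnonneg t) hlim]
  simp

theorem lintegral_enorm_le_measure_support {α E : Type*} [MeasurableSpace α] {ν : Measure α}
    [NormedAddCommGroup E] {f : α → E} (hf : ∀ᵐ x ∂ν, ‖f x‖ ≤ 1) :
    ∫⁻ x, ‖f x‖ₑ ∂ν ≤ ν (Function.support f) := by
  calc ∫⁻ x, ‖f x‖ₑ ∂ν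
      ≤ ∫⁻ x, (Function.support f).indicator (fun _ => 1) x ∂ν := by
        refine lintegral_mono_ae ?_
        filter_upwards [hf] with x hx
        by_cases h0 : f x = 0
        · simp [h0]
        · rw [indicator_of_mem (Function.mem_support.2 h0), ← ofReal_norm]
          exact ENNReal.ofReal_le_one.2 hx
    _ ≤ 1 * ν (Function.support f) := lintegral_indicator_const_le _ _
    _ = ν (Function.support f) := one_mul _

theorem measurePreserving_sub_mul_I :
    MeasurePreserving (fun p : ℝ × ℝ => (p.2 : ℂ) - (p.1 : ℂ) * Complex.I)
      ((volume : Measure ℝ).prod volume) volume := by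
  have h := Complex.volume_preserving_equiv_real_prod.symm.comp
    (((MeasurePreserving.id volume).prod (Measure.measurePreserving_neg volume)).comp
      (Measure.measurePreserving_swap (μ := (volume : Measure ℝ)) (ν := (volume : Measure ℝ))))
  have comp_eq : Complex.measurableEquivRealProd.symm ∘ Prod.map id Neg.neg ∘ Prod.swap
      = fun p : ℝ × ℝ => (p.2 : ℂ) - (p.1 : ℂ) * Complex.I := by
    funext p
    apply Complex.ext <;> simp
  rwa [← comp_eq]

theorem measurePreserving_sub_mul_I_restrict_im_neg :
    MeasurePreserving (fun p : ℝ × ℝ => (p.2 : ℂ) - (p.1 : ℂ) * Complex.I)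
      ((volume.restrict (Ioi (0 : ℝ))).prod volume)
      (volume.restrict {ζ : ℂ | ζ.im < 0}) := by
  have h := measurePreserving_sub_mul_I.restrict_preimage
    (measurableSet_lt Complex.measurable_im measurable_const : MeasurableSet {ζ : ℂ | ζ.im < 0})
  have preimage_eq : (fun p : ℝ × ℝ => (p.2 : ℂ) - (p.1 : ℂ) * Complex.I) ⁻¹' {ζ : ℂ | ζ.im < 0}
      = Ioi 0 ×ˢ univ := by
    ext p
    simp
  rwa [preimage_eq, ← Measure.prod_restrict, Measure.restrict_univ] at h

theorem setLIntegral_im_neg_eq {f : ℂ → ENNReal} (hf : Measurable f) :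
    ∫⁻ ζ in {ζ : ℂ | ζ.im < 0}, f ζ
      = ∫⁻ t in Ioi (0 : ℝ), ∫⁻ x : ℝ, f ((x : ℂ) - (t : ℂ) * Complex.I) := by
  rw [← measurePreserving_sub_mul_I_restrict_im_neg.lintegral_comp hf, lintegral_prod]
  exact (hf.comp measurePreserving_sub_mul_I.measurable).aemeasurable

theorem ae_ae_sub_mul_I_of_ae_restrict_im_neg {p : ℂ → Prop}
    (h : ∀ᵐ ζ ∂volume.restrict {ζ : ℂ | ζ.im < 0}, p ζ) :
    ∀ᵐ (t : ℝ) ∂volume.restrict (Ioi (0 : ℝ)), ∀ᵐ x : ℝ, p ((x : ℂ) - (t : ℂ) * Complex.I) :=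
  Measure.ae_ae_of_ae_prod
    (measurePreserving_sub_mul_I_restrict_im_neg.quasiMeasurePreserving.ae h)

theorem ae_lintegral_enorm_sub_mul_I_le_volume {E : Type*} [NormedAddCommGroup E] {f : ℂ → E}
    (hf : ∀ᵐ ζ ∂volume.restrict {ζ : ℂ | ζ.im < 0}, ‖f ζ‖ ≤ 1) :
    ∀ᵐ (t : ℝ) ∂volume.restrict (Ioi (0 : ℝ)),
      ∫⁻ x : ℝ, ‖f ((x : ℂ) - (t : ℂ) * Complex.I)‖ₑ
        ≤ volume {x : ℝ | f ((x : ℂ) - (t : ℂ) * Complex.I) ≠ 0} :=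
  (ae_ae_sub_mul_I_of_ae_restrict_im_neg hf).mono fun _ => lintegral_enorm_le_measure_support

section Tderiv

theorem enorm_Tderiv_le (μ : ℂ → ℂ) (z : ℂ) :
    ‖Tderiv μ z‖ₑ ≤ ENNReal.ofReal (2 / Real.pi) *
      ∫⁻ ζ in {ζ : ℂ | ζ.im < 0}, ‖μ ζ‖ₑ * ‖((ζ - z) ^ 3)⁻¹‖ₑ := by
  have constant_eq : ‖-(2 / (Real.pi : ℂ))‖ₑ = ENNReal.ofReal (2 / Real.pi) := by
    rw [← ofReal_norm, norm_neg, norm_div, Complex.norm_real,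
      Real.norm_of_nonneg Real.pi_pos.le, Complex.norm_ofNat]
  rw [Tderiv, enorm_mul, constant_eq]
  gcongr
  refine (enorm_integral_le_lintegral_enorm _).trans_eq (lintegral_congr fun ζ => ?_)
  rw [div_eq_mul_inv, enorm_mul]

variable {μ : ℂ → ℂ} {y : ℝ}

theorem lintegral_enorm_Tderiv_le_setLIntegral_im_neg (hμ : Measurable μ) (hy : 0 ≤ y) :
    ∫⁻ x : ℝ, ‖Tderiv μ ((x : ℂ) + (y : ℂ) * Complex.I)‖ₑ
      ≤ ENNReal.ofReal (2 / Real.pi) * ∫⁻ ζ in {ζ : ℂ | ζ.im < 0},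
          ‖μ ζ‖ₑ * ENNReal.ofReal (2 / (ζ.im - y) ^ 2) := by
  calc ∫⁻ x : ℝ, ‖Tderiv μ ((x : ℂ) + (y : ℂ) * Complex.I)‖ₑ
      ≤ ∫⁻ x : ℝ, ENNReal.ofReal (2 / Real.pi) * ∫⁻ ζ in {ζ : ℂ | ζ.im < 0},
          ‖μ ζ‖ₑ * ‖((ζ - ((x : ℂ) + (y : ℂ) * Complex.I)) ^ 3)⁻¹‖ₑ :=
        lintegral_mono fun x => enorm_Tderiv_le μ _
    _ = ENNReal.ofReal (2 / Real.pi) * ∫⁻ ζ in {ζ : ℂ | ζ.im < 0}, ∫⁻ x : ℝ,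
          ‖μ ζ‖ₑ * ‖((ζ - ((x : ℂ) + (y : ℂ) * Complex.I)) ^ 3)⁻¹‖ₑ := by
        rw [lintegral_const_mul' _ _ ENNReal.ofReal_ne_top, lintegral_lintegral_swap]
        fun_prop
    _ = ENNReal.ofReal (2 / Real.pi) * ∫⁻ ζ in {ζ : ℂ | ζ.im < 0},
          ‖μ ζ‖ₑ * ENNReal.ofReal (2 / (ζ.im - y) ^ 2) := by
        congr 1
        refine setLIntegral_congr_fun (measurableSet_lt Complex.measurable_im measurable_const)
          fun ζ (hζ : ζ.im < 0) => ?_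
        rw [lintegral_const_mul' _ _ enorm_ne_top,
          lintegral_enorm_inv_sub_pow_three (hζ.trans_le hy).ne]

theorem lintegral_enorm_Tderiv_le_setLIntegral_Ioi (hμ : Measurable μ) (hy : 0 ≤ y) :
    ∫⁻ x : ℝ, ‖Tderiv μ ((x : ℂ) + (y : ℂ) * Complex.I)‖ₑ
      ≤ ENNReal.ofReal (4 / Real.pi) * ∫⁻ t in Ioi (0 : ℝ),
          (∫⁻ x : ℝ, ‖μ ((x : ℂ) - (t : ℂ) * Complex.I)‖ₑ) * ENNReal.ofReal ((y + t) ^ 2)⁻¹ := by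
  have weight_eq (x t : ℝ) :
      ENNReal.ofReal (2 / (((x : ℂ) - (t : ℂ) * Complex.I).im - y) ^ 2)
        = ENNReal.ofReal 2 * ENNReal.ofReal ((y + t) ^ 2)⁻¹ := by
    rw [← ENNReal.ofReal_mul zero_le_two, div_eq_mul_inv]
    congr 3
    simp
    ring
  refine (lintegral_enorm_Tderiv_le_setLIntegral_im_neg hμ hy).trans_eq ?_
  rw [setLIntegral_im_neg_eq (by fun_prop)]
  simp_rw [weight_eq, mul_left_comm _ (ENNReal.ofReal 2),
    lintegral_const_mul' _ _ ENNReal.ofReal_ne_top, lintegral_mul_const' _ _ ENNReal.ofReal_ne_top]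
  rw [← mul_assoc, ← ENNReal.ofReal_mul (by positivity)]
  congr 2
  ring

end Tderiv

theorem stmt12_general {μ : ℂ → ℂ} (hμ : Measurable μ) {M : ENNReal}
    (hline : ∀ᵐ (t : ℝ) ∂volume.restrict (Ioi (0 : ℝ)),
      ∫⁻ x : ℝ, ‖μ ((x : ℂ) - (t : ℂ) * Complex.I)‖ₑ ≤ M)
    {y : ℝ} (hy : 0 < y) :
    ∫⁻ x : ℝ, ENNReal.ofReal (y * ‖Tderiv μ ((x : ℂ) + (y : ℂ) * Complex.I)‖)
      ≤ ENNReal.ofReal (4 / Real.pi) * M := by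
  have slice_bound : ∫⁻ t in Ioi (0 : ℝ),
      (∫⁻ x : ℝ, ‖μ ((x : ℂ) - (t : ℂ) * Complex.I)‖ₑ) * ENNReal.ofReal ((y + t) ^ 2)⁻¹
        ≤ M * ENNReal.ofReal y⁻¹ := by
    rw [← setLIntegral_Ioi_inv_add_sq hy, ← lintegral_const_mul _ (by fun_prop)]
    exact lintegral_mono_ae (hline.mono fun t ht => by gcongr)
  simp_rw [ENNReal.ofReal_mul hy.le, ofReal_norm]
  calc ∫⁻ x : ℝ, ENNReal.ofReal y * ‖Tderiv μ ((x : ℂ) + (y : ℂ) * Complex.I)‖ₑ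
      = ENNReal.ofReal y * ∫⁻ x : ℝ, ‖Tderiv μ ((x : ℂ) + (y : ℂ) * Complex.I)‖ₑ :=
        lintegral_const_mul' _ _ ENNReal.ofReal_ne_top
    _ ≤ ENNReal.ofReal y * (ENNReal.ofReal (4 / Real.pi) * (M * ENNReal.ofReal y⁻¹)) := by
        gcongr
        exact (lintegral_enorm_Tderiv_le_setLIntegral_Ioi hμ hy.le).trans (by gcongr)
    _ = ENNReal.ofReal y * ENNReal.ofReal y⁻¹ * (ENNReal.ofReal (4 / Real.pi) * M) := by ring
    _ = ENNReal.ofReal (4 / Real.pi) * M := by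
        rw [← ENNReal.ofReal_mul hy.le, mul_inv_cancel₀ hy.ne', ENNReal.ofReal_one, one_mul]

theorem stmt12 (μ : ℂ → ℂ) (hmeas : Measurable μ)
    (hbd : ∀ᵐ ζ : ℂ, ‖μ ζ‖ ≤ 1) (hsupp : ∀ ζ : ℂ, 0 ≤ ζ.im → μ ζ = 0)
    (M : ℝ) (hM : 0 < M)
    (hline : ∀ y : ℝ, 0 < y →
      volume {x : ℝ | μ ((x : ℂ) - (y : ℂ) * Complex.I) ≠ 0} ≤ ENNReal.ofReal M) :
    ∀ y : ℝ, 0 < y →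
      ∫⁻ x : ℝ, ENNReal.ofReal (y * ‖Tderiv μ ((x : ℂ) + (y : ℂ) * Complex.I)‖)
        ≤ ENNReal.ofReal ((8 / Real.pi) * M) := by
  intro y hy
  have slice_le : ∀ᵐ (t : ℝ) ∂volume.restrict (Ioi (0 : ℝ)),
      ∫⁻ x : ℝ, ‖μ ((x : ℂ) - (t : ℂ) * Complex.I)‖ₑ ≤ ENNReal.ofReal M := by
    filter_upwards [ae_lintegral_enorm_sub_mul_I_le_volume (ae_restrict_of_ae hbd),
      ae_restrict_mem measurableSet_Ioi] with t le_volume ht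
    exact le_volume.trans (hline t ht)
  refine (stmt12_general hmeas slice_le hy).trans ?_
  rw [ENNReal.ofReal_mul (by positivity)]
  gcongr
  norm_num
end

section
/- Let μ : ℂ → ℂ be measurable with |μ| ≤ 1 a.e. on the unit disk 𝔻 and μ = 0 outside 𝔻. Let ξ(w) = e^{−2πiw}, which maps the upper half-plane ℍ onto the exterior disk 𝔻* = {|z| > 1} and the lower half-plane onto 𝔻 \ {0}, and define the pullback ν(w) := μ(ξ(w)) · conj(ξ'(w))/ξ'(w) for Im w < 0 and ν = 0 elsewhere, so that ν vanishes outside the lower half-plane and |ν| ≤ 1 a.e. Define T_𝔻μ(z) := -(2/π)∫_𝔻 μ(ζ)/(ζ−z)³ dA(ζ) for |z| > 1, and T_ℍν(w) := -(2/π)∫_{Im ζ<0} ν(ζ)/(ζ−w)³ dA(ζ) for Im w > 0. Then for every ε > 0 there exists δ > 0 such that for all w ∈ ℍ with Im w < δ, | 2·Im(w)·|T_ℍν(w)| − (|ξ(w)|² − 1)·|T_𝔻μ(ξ(w))| | < ε. -/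
open Complex MeasureTheory Filter Topology Set

/-- The exponential map `ξ(w) = e^{−2πiw}`, taking the upper half-plane onto the
exterior disk and the lower half-plane onto `𝔻 \ {0}`. -/
noncomputable def xiExp (w : ℂ) : ℂ := Complex.exp (-2 * Real.pi * Complex.I * w)

/-- The pullback Beltrami coefficient
`ν(w) = μ(ξ(w))·conj(ξ'(w))/ξ'(w)` for `Im w < 0`, and `0` elsewhere;
here `ξ'(w) = −2πi·ξ(w)`. -/
noncomputable def nuPull (μ : ℂ → ℂ) (w : ℂ) : ℂ :=
  if w.im < 0 then
    μ (xiExp w) * (starRingEnd ℂ) (-2 * Real.pi * Complex.I * xiExp w) /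
      (-2 * Real.pi * Complex.I * xiExp w)
  else 0

/-- The derivative of the Beurling transform of `μ` supported in the unit disk:
`T_𝔻μ(z) = -(2/π) ∫_𝔻 μ(ζ)/(ζ−z)³ dA(ζ)`. -/
noncomputable def TderivDisk (μ : ℂ → ℂ) (z : ℂ) : ℂ :=
  -(2 / (Real.pi : ℂ)) * ∫ ζ in Metric.ball (0:ℂ) 1, μ ζ / (ζ - z)^3

/-- The derivative of the Beurling transform of `ν` supported in the lower
half-plane: `T_ℍν(w) = -(2/π) ∫_{Im ζ<0} ν(ζ)/(ζ−w)³ dA(ζ)`. -/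
noncomputable def TderivHalf (ν : ℂ → ℂ) (w : ℂ) : ℂ :=
  -(2 / (Real.pi : ℂ)) * ∫ ζ in {ζ : ℂ | ζ.im < 0}, ν ζ / (ζ - w)^3

/-!
Since `ξ` is 1-periodic, so is `ν`, and the integral over the lower half-plane folds to a
half-strip, where the cubic kernel becomes `∑ₙ 1 / (η - w + n) ^ 3`. The Lipschitz formula sums
this to a rational function of `ζ = ξ(η)` and `z = ξ(w)`, and the substitution `ζ = ξ(η)` gives
the exact identity `T_ℍ ν(w) = ξ'(w) (T_𝔻 μ(z) + R(z))`, with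
`R(z) = (1 / π) ∫_𝔻 μ(ζ) / (ζ (ζ - z) ^ 2) dA(ζ)`.

For `ρ = |z|` one has `2 Im w |ξ'(w)| = 2 ρ log ρ`, which differs from `ρ ^ 2 - 1` by at most
`(ρ - 1) ^ 2`. Hence the two rescaled moduli differ by
`O((ρ - 1) |R(z)| + (ρ - 1) ^ 2 |T_𝔻 μ(z)|)`. Because `|ζ - z| > ρ - 1` on `𝔻`, both weighted
kernels are `O((ρ - 1) ^ (1 / 2))` times the integrable function `|ζ|^(-3/2) + |ζ - z|^(-3/2)`.
-/

section ChangeOfVariables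

variable {E F : Type*} [NormedAddCommGroup E] [NormedSpace ℝ E] [FiniteDimensional ℝ E]
  [MeasurableSpace E] [BorelSpace E] [NormedAddCommGroup F] [NormedSpace ℝ F]

theorem quasiMeasurePreserving_restrict_image_of_det_ne_zero {ρ : Measure E} [ρ.IsAddHaarMeasure]
    {f : E → E} {f' : E → E →L[ℝ] E} {s : Set E} (hs : MeasurableSet s) (hfm : Measurable f)
    (hf' : ∀ x ∈ s, HasFDerivWithinAt f (f' x) s x) (hf : InjOn f s)
    (hdet : ∀ x ∈ s, (f' x).det ≠ 0) :
    Measure.QuasiMeasurePreserving f (ρ.restrict s) (ρ.restrict (f '' s)) := by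
  refine ⟨hfm, ?_⟩
  rw [← map_withDensity_abs_det_fderiv_eq_addHaar ρ hs.nullMeasurableSet hf' hf]
  refine Measure.AbsolutelyContinuous.map (withDensity_absolutelyContinuous'
    (aemeasurable_ofReal_abs_det_fderivWithin ρ hs hf') ?_) hfm
  filter_upwards [ae_restrict_mem hs] with x hx
  simpa using hdet x hx

theorem det_toSpanSingleton_restrictScalars (a : ℂ) :
    ((ContinuousLinearMap.toSpanSingleton ℂ a).restrictScalars ℝ).det = ‖a‖ ^ 2 := by
  simp [ContinuousLinearMap.det, LinearMap.det_restrictScalars, Algebra.norm_complex_eq,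
    normSq_eq_norm_sq]

theorem setIntegral_image_eq_setIntegral_norm_deriv_sq_smul {f f' : ℂ → ℂ} {s : Set ℂ}
    (hs : MeasurableSet s) (hf' : ∀ x ∈ s, HasDerivAt f (f' x) x) (hf : InjOn f s) (g : ℂ → F) :
    ∫ z in f '' s, g z = ∫ x in s, ‖f' x‖ ^ 2 • g (f x) := by
  rw [integral_image_eq_integral_abs_det_fderiv_smul volume hs (fun x hx =>
    ((hf' x hx).hasFDerivAt.restrictScalars ℝ).hasFDerivWithinAt) hf]
  simp only [det_toSpanSingleton_restrictScalars, abs_sq]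

end ChangeOfVariables

section Domination

theorem integrable_of_mul_norm_le {α E : Type*} [MeasurableSpace α] [NormedAddCommGroup E]
    {ρ : Measure α} {k : α → E} {m : α → ℝ} {c : ℝ} (hc : 0 < c) (hm : Integrable m ρ)
    (hk : AEStronglyMeasurable k ρ) (hkm : ∀ᵐ x ∂ρ, c * ‖k x‖ ≤ m x) : Integrable k ρ := by
  refine (hm.const_mul c⁻¹).mono' hk ?_
  filter_upwards [hkm] with x hx
  rwa [← div_eq_inv_mul, le_div_iff₀' hc]

theorem mul_norm_integral_mul_le {α 𝕜 : Type*} [MeasurableSpace α] [RCLike 𝕜] {ρ : Measure α}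
    {f k : α → 𝕜} {m : α → ℝ} {c K : ℝ} (hc : 0 ≤ c) (hm : Integrable m ρ)
    (hf : ∀ᵐ x ∂ρ, ‖f x‖ ≤ K) (hkm : ∀ᵐ x ∂ρ, c * ‖k x‖ ≤ m x) :
    c * ‖∫ x, f x * k x ∂ρ‖ ≤ K * ∫ x, m x ∂ρ :=
  calc c * ‖∫ x, f x * k x ∂ρ‖
      ≤ c * ∫ x, ‖f x * k x‖ ∂ρ := by gcongr; exact norm_integral_le_integral_norm _
    _ = ∫ x, c * ‖f x * k x‖ ∂ρ := (integral_const_mul c _).symm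
    _ ≤ ∫ x, K * m x ∂ρ := by
        refine integral_mono_of_nonneg (.of_forall fun _ => by positivity) (hm.const_mul K) ?_
        filter_upwards [hf, hkm] with x hfx hkx
        calc c * ‖f x * k x‖ = ‖f x‖ * (c * ‖k x‖) := by rw [norm_mul]; ring
          _ ≤ K * m x := mul_le_mul hfx hkx (by positivity) ((norm_nonneg _).trans hfx)
    _ = K * ∫ x, m x ∂ρ := integral_const_mul K _

end Domination

section PowerKernel

variable {E : Type*} [NormedAddCommGroup E] [NormedSpace ℝ E] [FiniteDimensional ℝ E]
  [MeasurableSpace E] [BorelSpace E]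

theorem integrableOn_norm_sub_rpow_neg {ρ : Measure E} [ρ.IsAddHaarMeasure] {s : Set E}
    (hs : MeasurableSet s) {a : E} {r p : ℝ} (hr : 0 < r) (hp : Module.finrank ℝ E < p)
    (hdist : ∀ x ∈ s, r ≤ ‖x - a‖) :
    IntegrableOn (fun x => ‖x - a‖ ^ (-p)) s ρ := by
  have hp₀ : 0 < p := (Nat.cast_nonneg _).trans_lt hp
  have hdom : Integrable (fun x => (r / (1 + r)) ^ (-p) * (1 + ‖x - a‖) ^ (-p)) ρ :=
    ((integrable_one_add_norm hp).comp_sub_right a).const_mul _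
  refine hdom.integrableOn.mono' (Measurable.aestronglyMeasurable (by fun_prop)) ?_
  filter_upwards [ae_restrict_mem hs] with x hx
  have hle : r / (1 + r) * (1 + ‖x - a‖) ≤ ‖x - a‖ := by
    rw [div_mul_eq_mul_div, div_le_iff₀ (by positivity)]
    linarith [hdist x hx]
  rw [Real.norm_of_nonneg (by positivity), ← Real.mul_rpow (by positivity) (by positivity)]
  exact Real.rpow_le_rpow_of_nonpos (by positivity) hle (neg_nonpos.2 hp₀.le)

theorem integrableOn_ball_norm_rpow_neg [Nontrivial E] {ρ : Measure E} [ρ.IsAddHaarMeasure]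
    {p : ℝ} (hp : p < Module.finrank ℝ E) (r : ℝ) :
    IntegrableOn (fun x => ‖x‖ ^ (-p)) (Metric.ball 0 r) ρ :=
  integrableOn_ball_of_norm_le_rpow (C := 1) Module.finrank_pos hp
    (.of_forall fun x => by rw [one_mul, Real.norm_of_nonneg (by positivity)])
    (Measurable.aestronglyMeasurable (by fun_prop))

theorem measurePreserving_sub_right_ball {G : Type*} [SeminormedAddCommGroup G]
    [MeasurableSpace G] [BorelSpace G] (ρ : Measure G) [ρ.IsAddRightInvariant] (a : G) (r : ℝ) :
    MeasurePreserving (· - a) (ρ.restrict (Metric.ball a r)) (ρ.restrict (Metric.ball 0 r)) := by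
  convert! (measurePreserving_sub_right ρ a).restrict_preimage
    (Metric.isOpen_ball (x := (0 : G)) (ε := r)).measurableSet using 2
  ext x
  simp [dist_eq_norm]

theorem integrableOn_ball_norm_sub_rpow_neg [Nontrivial E] {ρ : Measure E} [ρ.IsAddHaarMeasure]
    {p : ℝ} (hp : p < Module.finrank ℝ E) (a : E) (r : ℝ) :
    IntegrableOn (fun x => ‖x - a‖ ^ (-p)) (Metric.ball a r) ρ :=
  ((measurePreserving_sub_right_ball ρ a r).integrable_comp_emb
    (measurableEmbedding_subRight a)).2 (integrableOn_ball_norm_rpow_neg hp r)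

theorem setIntegral_ball_norm_sub_rpow_neg {G : Type*} [SeminormedAddCommGroup G]
    [MeasurableSpace G] [BorelSpace G] (ρ : Measure G) [ρ.IsAddRightInvariant] (p : ℝ) (a : G)
    (r : ℝ) :
    ∫ x in Metric.ball a r, ‖x - a‖ ^ (-p) ∂ρ = ∫ x in Metric.ball 0 r, ‖x‖ ^ (-p) ∂ρ :=
  (measurePreserving_sub_right_ball ρ a r).integral_comp
    (measurableEmbedding_subRight a) fun x => ‖x‖ ^ (-p)

end PowerKernel

section ExponentialMap

theorem hasDerivAt_xiExp (w : ℂ) : HasDerivAt xiExp (-2 * Real.pi * I * xiExp w) w := by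
  rw [mul_comm]
  exact (hasDerivAt_const_mul (-2 * Real.pi * I : ℂ)).cexp

theorem deriv_xiExp (w : ℂ) : deriv xiExp w = -2 * Real.pi * I * xiExp w :=
  (hasDerivAt_xiExp w).deriv

theorem xiExp_ne_zero (w : ℂ) : xiExp w ≠ 0 := exp_ne_zero _

theorem deriv_xiExp_ne_zero (w : ℂ) : deriv xiExp w ≠ 0 := by
  simp [deriv_xiExp, xiExp_ne_zero, Real.pi_ne_zero]

theorem continuous_xiExp : Continuous xiExp := by
  unfold xiExp; fun_prop

theorem xiExp_sub (a b : ℂ) : xiExp (a - b) = xiExp a / xiExp b := by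
  simp only [xiExp, mul_sub, exp_sub]

theorem xiExp_eq_xiExp_iff {a b : ℂ} : xiExp a = xiExp b ↔ ∃ n : ℤ, a = b + n := by
  have hc : -(2 * Real.pi * I) ≠ 0 := neg_ne_zero.2 two_pi_I_ne_zero
  simp only [xiExp, exp_eq_exp_iff_exists_int]
  refine (Equiv.neg ℤ).exists_congr fun n => ?_
  rw [← mul_right_inj' hc (b := a)]
  push_cast [Equiv.neg_apply]
  constructor <;> intro h <;> linear_combination h

theorem xiExp_add_intCast (w : ℂ) (n : ℤ) : xiExp (w + n) = xiExp w :=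
  xiExp_eq_xiExp_iff.2 ⟨n, rfl⟩

theorem norm_xiExp (w : ℂ) : ‖xiExp w‖ = Real.exp (2 * Real.pi * w.im) := by
  simp [xiExp, norm_exp]

theorem norm_deriv_xiExp (w : ℂ) : ‖deriv xiExp w‖ = 2 * Real.pi * ‖xiExp w‖ := by
  simp [deriv_xiExp, abs_of_pos Real.pi_pos]

theorem log_norm_xiExp (w : ℂ) : Real.log ‖xiExp w‖ = 2 * Real.pi * w.im := by
  rw [norm_xiExp, Real.log_exp]

theorem norm_xiExp_lt_one_iff {w : ℂ} : ‖xiExp w‖ < 1 ↔ w.im < 0 := by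
  rw [norm_xiExp, Real.exp_lt_one_iff, ← neg_pos, ← mul_neg,
    mul_pos_iff_of_pos_left Real.two_pi_pos, neg_pos]

theorem one_lt_norm_xiExp_iff {w : ℂ} : 1 < ‖xiExp w‖ ↔ 0 < w.im := by
  rw [norm_xiExp, Real.one_lt_exp_iff, mul_pos_iff_of_pos_left Real.two_pi_pos]

theorem exists_xiExp_eq {ζ : ℂ} (hζ : ζ ≠ 0) : ∃ η, xiExp η = ζ := by
  refine ⟨log ζ / (-2 * Real.pi * I), ?_⟩
  rw [xiExp, mul_div_cancel₀ _ (by simp [Real.pi_ne_zero]), exp_log hζ]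

/-- The half-strip `n ≤ Re ζ < n + 1`, `Im ζ < 0`: a fundamental domain for the action of the
deck transformations `ζ ↦ ζ + 1` of `xiExp` on the lower half-plane. -/
def lowerStrip (n : ℤ) : Set ℂ := Ico (n : ℝ) (n + 1) ×ℂ Iio 0

theorem measurableSet_lowerStrip (n : ℤ) : MeasurableSet (lowerStrip n) :=
  (measurable_re measurableSet_Ico).inter (measurable_im measurableSet_Iio)

theorem iUnion_lowerStrip : ⋃ n, lowerStrip n = {ζ : ℂ | ζ.im < 0} := by
  ext ζ
  have hre : ∃ n : ℤ, ζ.re ∈ Ico (n : ℝ) (n + 1) :=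
    mem_iUnion.1 (iUnion_Ico_intCast ℝ ▸ mem_univ ζ.re)
  simp [lowerStrip, mem_reProdIm, hre, -mem_Ico]

theorem pairwise_disjoint_lowerStrip : Pairwise (Function.onFun Disjoint lowerStrip) :=
  fun _ _ hmn => ((pairwise_disjoint_Ico_intCast ℝ hmn).preimage re).mono
    inter_subset_left inter_subset_left

theorem add_intCast_mem_lowerStrip_iff {η : ℂ} {n : ℤ} :
    η + n ∈ lowerStrip n ↔ η ∈ lowerStrip 0 := by
  simp [lowerStrip, mem_reProdIm, add_comm (η.re)]

theorem injOn_xiExp_lowerStrip (n : ℤ) : InjOn xiExp (lowerStrip n) := by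
  intro a ha b hb hab
  obtain ⟨k, rfl⟩ := xiExp_eq_xiExp_iff.1 hab
  obtain ⟨⟨hb₁, hb₂⟩, -⟩ := hb
  obtain ⟨⟨ha₁, ha₂⟩, -⟩ := ha
  simp only [add_re, intCast_re] at ha₁ ha₂
  have hk₁ : (k : ℝ) < 1 := by linarith
  have hk₂ : (-1 : ℝ) < k := by linarith
  have hk : k = 0 := by
    norm_cast at hk₁ hk₂
    lia
  simp [hk]

theorem image_xiExp_lowerStrip (n : ℤ) : xiExp '' lowerStrip n = Metric.ball 0 1 \ {0} := by
  refine Subset.antisymm ?_ fun ζ ⟨hζ, hζ₀⟩ => ?_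
  · rintro _ ⟨η, hη, rfl⟩
    exact ⟨mem_ball_zero_iff.2 (norm_xiExp_lt_one_iff.2 hη.2), xiExp_ne_zero η⟩
  · obtain ⟨η, rfl⟩ := exists_xiExp_eq hζ₀
    have him : η.im < 0 := norm_xiExp_lt_one_iff.1 (mem_ball_zero_iff.1 hζ)
    obtain ⟨m, hm⟩ := mem_iUnion.1 (iUnion_lowerStrip.symm ▸ him : η ∈ ⋃ m, lowerStrip m)
    have h₀ : η - m ∈ lowerStrip 0 :=
      add_intCast_mem_lowerStrip_iff.1 ((sub_add_cancel η (m : ℂ)).symm ▸ hm)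
    refine ⟨η - m + n, add_intCast_mem_lowerStrip_iff.2 h₀, ?_⟩
    rw [xiExp_add_intCast, ← xiExp_add_intCast _ m, sub_add_cancel]

theorem image_xiExp_lowerStrip_ae_eq (n : ℤ) :
    xiExp '' lowerStrip n =ᵐ[volume] Metric.ball (0 : ℂ) 1 := by
  rw [image_xiExp_lowerStrip]
  exact sdiff_null_ae_eq_self (measure_singleton _)

theorem quasiMeasurePreserving_xiExp :
    Measure.QuasiMeasurePreserving xiExp (volume.restrict {ζ : ℂ | ζ.im < 0})
      (volume.restrict (Metric.ball 0 1)) := by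
  refine ⟨continuous_xiExp.measurable, Measure.AbsolutelyContinuous.mk fun N hN hN₀ => ?_⟩
  rw [Measure.map_apply continuous_xiExp.measurable hN, ← iUnion_lowerStrip]
  refine nonpos_iff_eq_zero.1 <| (Measure.restrict_iUnion_le _).trans ?_
  rw [Measure.sum_apply_of_countable, nonpos_iff_eq_zero, ENNReal.tsum_eq_zero]
  intro n
  have hstrip := quasiMeasurePreserving_restrict_image_of_det_ne_zero (ρ := volume)
    (measurableSet_lowerStrip n) continuous_xiExp.measurable
    (fun η _ => ((hasDerivAt_xiExp η).hasFDerivAt.restrictScalars ℝ).hasFDerivWithinAt)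
    (injOn_xiExp_lowerStrip n) fun η _ => by
      rw [det_toSpanSingleton_restrictScalars, ← deriv_xiExp]
      exact pow_ne_zero 2 (norm_ne_zero_iff.2 (deriv_xiExp_ne_zero η))
  rw [Measure.restrict_congr_set (image_xiExp_lowerStrip_ae_eq n)] at hstrip
  exact hstrip.preimage_null hN₀

theorem setIntegral_ball_eq_setIntegral_lowerStrip {F : Type*} [NormedAddCommGroup F]
    [NormedSpace ℝ F] (n : ℤ) (g : ℂ → F) :
    ∫ ζ in Metric.ball (0 : ℂ) 1, g ζ =
      ∫ η in lowerStrip n, ‖deriv xiExp η‖ ^ 2 • g (xiExp η) := by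
  rw [← setIntegral_congr_set (image_xiExp_lowerStrip_ae_eq n)]
  exact setIntegral_image_eq_setIntegral_norm_deriv_sq_smul (measurableSet_lowerStrip n)
    (fun η _ => (hasDerivAt_xiExp η).differentiableAt.hasDerivAt) (injOn_xiExp_lowerStrip n) g

end ExponentialMap

section Periodization

theorem measurePreserving_add_intCast_lowerStrip (n : ℤ) :
    MeasurePreserving (· + (n : ℂ)) (volume.restrict (lowerStrip 0))
      (volume.restrict (lowerStrip n)) := by
  convert! (measurePreserving_add_right volume (n : ℂ)).restrict_preimage
    (measurableSet_lowerStrip n) using 2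
  ext η
  exact add_intCast_mem_lowerStrip_iff.symm

theorem setIntegral_lowerStrip_eq_setIntegral_lowerStrip_zero {F : Type*} [NormedAddCommGroup F]
    [NormedSpace ℝ F] (n : ℤ) (f : ℂ → F) :
    ∫ ζ in lowerStrip n, f ζ = ∫ η in lowerStrip 0, f (η + n) :=
  ((measurePreserving_add_intCast_lowerStrip n).integral_comp
    (measurableEmbedding_addRight _) f).symm

theorem setIntegral_im_neg_eq_setIntegral_lowerStrip_tsum {F : Type*} [NormedAddCommGroup F]
    [NormedSpace ℝ F] {f : ℂ → F} (hf : IntegrableOn f {ζ | ζ.im < 0}) :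
    ∫ ζ in {ζ : ℂ | ζ.im < 0}, f ζ = ∫ η in lowerStrip 0, ∑' n : ℤ, f (η + n) := by
  rw [← iUnion_lowerStrip] at hf ⊢
  have hint (n : ℤ) : Integrable (fun η => f (η + n)) (volume.restrict (lowerStrip 0)) :=
    ((measurePreserving_add_intCast_lowerStrip n).integrable_comp_emb
      (measurableEmbedding_addRight _)).2 (hf.mono_set (subset_iUnion _ n))
  have hsum := hasSum_integral_iUnion measurableSet_lowerStrip pairwise_disjoint_lowerStrip hf
  have hsum_norm := (hasSum_integral_iUnion measurableSet_lowerStrip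
    pairwise_disjoint_lowerStrip hf.norm).summable
  rw [funext fun n => setIntegral_lowerStrip_eq_setIntegral_lowerStrip_zero n f] at hsum
  rw [funext fun n => setIntegral_lowerStrip_eq_setIntegral_lowerStrip_zero n (‖f ·‖)] at hsum_norm
  rw [← hsum.tsum_eq, integral_tsum_of_summable_integral_norm hint hsum_norm]

theorem tsum_sq_mul_geometric_of_norm_lt_one {𝕜 : Type*} [NormedField 𝕜] {r : 𝕜}
    (hr : ‖r‖ < 1) : ∑' n : ℕ, (n : 𝕜) ^ 2 * r ^ n = r * (1 + r) / (1 - r) ^ 3 := by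
  have hr₁ : 1 - r ≠ 0 := sub_ne_zero.2 (by rintro rfl; simp at hr)
  have hsq (n : ℕ) : (n : 𝕜) ^ 2 = 2 * ((n + 2).choose 2 : ℕ) - 3 * ((n + 1).choose 1 : ℕ)
      + (n.choose 0 : ℕ) := by
    have hchoose : 2 * (n + 2).choose 2 = (n + 2) * (n + 1) := by
      rw [Nat.choose_two_right, Nat.mul_div_cancel' (Nat.even_mul_pred_self _).two_dvd]
      rfl
    have hcast : (2 : 𝕜) * ((n + 2).choose 2 : ℕ) = (n + 2) * (n + 1) :=
      mod_cast congrArg (Nat.cast (R := 𝕜)) hchoose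
    rw [hcast, Nat.choose_one_right, Nat.choose_zero_right]
    push_cast
    ring
  have hsum := (((hasSum_choose_mul_geometric_of_norm_lt_one 2 hr).mul_left 2).sub
    ((hasSum_choose_mul_geometric_of_norm_lt_one 1 hr).mul_left 3)).add
    (hasSum_choose_mul_geometric_of_norm_lt_one 0 hr)
  simp only [hsq, add_mul, sub_mul, mul_assoc]
  refine hsum.tsum_eq.trans ?_
  field_simp
  ring

theorem tsum_one_div_add_intCast_pow_three {h : ℂ} (hh : h.im < 0) :
    ∑' n : ℤ, 1 / (h + n) ^ 3 =
      (-2 * Real.pi * I) ^ 3 / 2 * (xiExp h * (xiExp h + 1) / (xiExp h - 1) ^ 3) := by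
  have hq : cexp (2 * Real.pi * I * -h) = xiExp h := by rw [xiExp]; ring_nf
  have hlip := EisensteinSeries.qExpansion_identity one_le_two ⟨-h, by simpa using hh⟩
  simp only [hq, tsum_sq_mul_geometric_of_norm_lt_one (norm_xiExp_lt_one_iff.2 hh)] at hlip
  calc ∑' n : ℤ, 1 / (h + n) ^ 3
      = -∑' n : ℤ, 1 / (-h + n) ^ (2 + 1) := by
        rw [← tsum_neg, ← (Equiv.neg ℤ).tsum_eq]
        refine tsum_congr fun n => ?_
        rw [← one_div_neg_eq_neg_one_div, ← Odd.neg_pow (by decide)]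
        simp [add_comm]
    _ = -((-2 * Real.pi * I) ^ 3 / 2 * (xiExp h * (1 + xiExp h) / (1 - xiExp h) ^ 3)) := by
        rw [hlip]
        simp
    _ = _ := by
        rw [← neg_sub (xiExp h) 1, Odd.neg_pow (by decide), div_neg, mul_neg, neg_neg, add_comm 1]

end Periodization

section Pullback

variable {μ : ℂ → ℂ} {η w : ℂ}

theorem nuPull_of_im_neg (hη : η.im < 0) :
    nuPull μ η = μ (xiExp η) * (starRingEnd ℂ (deriv xiExp η) / deriv xiExp η) := by
  rw [nuPull, if_pos hη, mul_div_assoc, deriv_xiExp]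

theorem norm_nuPull_of_im_neg (hη : η.im < 0) : ‖nuPull μ η‖ = ‖μ (xiExp η)‖ := by
  rw [nuPull_of_im_neg hη, norm_mul, norm_div, RCLike.norm_conj,
    div_self (norm_ne_zero_iff.2 (deriv_xiExp_ne_zero η)), mul_one]

theorem nuPull_add_intCast (μ : ℂ → ℂ) (η : ℂ) (n : ℤ) : nuPull μ (η + n) = nuPull μ η := by
  simp [nuPull, xiExp_add_intCast]

theorem aestronglyMeasurable_nuPull
    (hμ : AEStronglyMeasurable μ (volume.restrict (Metric.ball 0 1))) :
    AEStronglyMeasurable (nuPull μ) (volume.restrict {η | η.im < 0}) := by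
  have hunit : Measurable fun η => starRingEnd ℂ (deriv xiExp η) / deriv xiExp η :=
    (Complex.continuous_conj.measurable.comp (measurable_deriv xiExp)).div (measurable_deriv xiExp)
  refine ((hμ.comp_quasiMeasurePreserving quasiMeasurePreserving_xiExp).mul
    hunit.aestronglyMeasurable).congr ?_
  filter_upwards [ae_restrict_mem (measurableSet_lt measurable_im measurable_const)] with η hη
  exact (nuPull_of_im_neg hη).symm

theorem ae_norm_nuPull_le {K : ℝ} (hK : ∀ᵐ ζ ∂volume.restrict (Metric.ball 0 1), ‖μ ζ‖ ≤ K) :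
    ∀ᵐ η ∂volume.restrict {η : ℂ | η.im < 0}, ‖nuPull μ η‖ ≤ K := by
  filter_upwards [quasiMeasurePreserving_xiExp.ae hK,
    ae_restrict_mem (measurableSet_lt measurable_im measurable_const)] with η hη him
  exact (norm_nuPull_of_im_neg him).trans_le hη

theorem integrableOn_im_neg_inv_sub_pow_three (hw : 0 < w.im) :
    IntegrableOn (fun ζ => ((ζ - w) ^ 3)⁻¹) {ζ | ζ.im < 0} := by
  have hmeas : MeasurableSet {ζ : ℂ | ζ.im < 0} := measurableSet_lt measurable_im measurable_const
  have hdist : ∀ ζ ∈ {ζ : ℂ | ζ.im < 0}, w.im ≤ ‖ζ - w‖ := fun ζ hζ => by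
    have him := neg_le_of_abs_le (abs_im_le_norm (ζ - w))
    rw [sub_im] at him
    linarith [hζ.out]
  have hdim : (Module.finrank ℝ ℂ : ℝ) < 3 := by rw [finrank_real_complex]; norm_num
  refine (integrableOn_norm_sub_rpow_neg hmeas hw hdim hdist).mono' (by fun_prop)
    (.of_forall fun ζ => ?_)
  rw [Real.rpow_neg (norm_nonneg _), norm_inv, norm_pow]
  exact_mod_cast le_rfl

theorem integrableOn_nuPull_div_sub_pow_three
    (hμ : AEStronglyMeasurable μ (volume.restrict (Metric.ball 0 1))) {K : ℝ}
    (hK : ∀ᵐ ζ ∂volume.restrict (Metric.ball 0 1), ‖μ ζ‖ ≤ K) (hw : 0 < w.im) :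
    IntegrableOn (fun ζ => nuPull μ ζ / (ζ - w) ^ 3) {ζ | ζ.im < 0} :=
  (integrableOn_im_neg_inv_sub_pow_three hw).bdd_mul (aestronglyMeasurable_nuPull hμ)
    (ae_norm_nuPull_le hK)

theorem nuPull_mul_tsum (hη : η.im < 0) (hw : 0 < w.im) :
    nuPull μ η * ∑' n : ℤ, 1 / (η - w + n) ^ 3 =
      ‖deriv xiExp η‖ ^ 2 • (deriv xiExp w * (μ (xiExp η) / (xiExp η - xiExp w) ^ 3 -
        1 / 2 * (μ (xiExp η) / (xiExp η * (xiExp η - xiExp w) ^ 2)))) := by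
  have hne : xiExp η - xiExp w ≠ 0 := fun h => by
    have hlt := norm_xiExp_lt_one_iff.2 hη
    rw [sub_eq_zero.1 h] at hlt
    exact (one_lt_norm_xiExp_iff.2 hw).not_gt hlt
  rw [tsum_one_div_add_intCast_pow_three (by rw [sub_im]; linarith), xiExp_sub,
    nuPull_of_im_neg hη, real_smul, ofReal_pow, ← conj_mul', deriv_xiExp w]
  have hη₀ := xiExp_ne_zero η
  have hw₀ := xiExp_ne_zero w
  have hπ : (Real.pi : ℂ) ≠ 0 := by simp [Real.pi_ne_zero]
  generalize starRingEnd ℂ (deriv xiExp η) = D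
  rw [deriv_xiExp]
  field_simp
  ring

end Pullback

section DiskKernel

/-- The integrable function `ζ ↦ |ζ|^{-3/2} + |ζ - z|^{-3/2}`, which dominates, after rescaling by
powers of `|z| - 1`, the kernels of `TderivDisk` and `TderivCorrection` at `z`. -/
noncomputable def singularMajorant (z ζ : ℂ) : ℝ :=
  ‖ζ‖ ^ (-(3 / 2) : ℝ) + ‖ζ - z‖ ^ (-(3 / 2) : ℝ)

theorem ball_zero_one_subset_ball (z : ℂ) : Metric.ball (0 : ℂ) 1 ⊆ Metric.ball z (1 + ‖z‖) :=
  Metric.ball_subset_ball' (by simp)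

theorem integrableOn_singularMajorant (z : ℂ) :
    IntegrableOn (singularMajorant z) (Metric.ball 0 1) :=
  have hdim : (3 / 2 : ℝ) < Module.finrank ℝ ℂ := by rw [finrank_real_complex]; norm_num
  (integrableOn_ball_norm_rpow_neg hdim 1).add
    ((integrableOn_ball_norm_sub_rpow_neg hdim z _).mono_set (ball_zero_one_subset_ball z))

theorem setIntegral_singularMajorant_le {z : ℂ} {r : ℝ} (hz : 1 + ‖z‖ ≤ r) :
    ∫ ζ in Metric.ball 0 1, singularMajorant z ζ ≤
      2 * ∫ ζ in Metric.ball (0 : ℂ) r, ‖ζ‖ ^ (-(3 / 2) : ℝ) := by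
  have hsub₀ : Metric.ball (0 : ℂ) 1 ⊆ Metric.ball 0 r :=
    Metric.ball_subset_ball (by linarith [norm_nonneg z])
  have hsub : Metric.ball (0 : ℂ) 1 ⊆ Metric.ball z r :=
    (ball_zero_one_subset_ball z).trans (Metric.ball_subset_ball hz)
  have hdim : (3 / 2 : ℝ) < Module.finrank ℝ ℂ := by rw [finrank_real_complex]; norm_num
  have hint₀ := integrableOn_ball_norm_rpow_neg (ρ := volume) hdim r
  have hint := integrableOn_ball_norm_sub_rpow_neg (ρ := volume) hdim z r
  calc ∫ ζ in Metric.ball 0 1, singularMajorant z ζ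
      = (∫ ζ in Metric.ball (0 : ℂ) 1, ‖ζ‖ ^ (-(3 / 2) : ℝ)) +
          ∫ ζ in Metric.ball (0 : ℂ) 1, ‖ζ - z‖ ^ (-(3 / 2) : ℝ) :=
        integral_add (hint₀.mono_set hsub₀) (hint.mono_set hsub)
    _ ≤ (∫ ζ in Metric.ball (0 : ℂ) r, ‖ζ‖ ^ (-(3 / 2) : ℝ)) +
          ∫ ζ in Metric.ball z r, ‖ζ - z‖ ^ (-(3 / 2) : ℝ) :=
        add_le_add
          (setIntegral_mono_set hint₀ (.of_forall fun _ => by positivity) hsub₀.eventuallyLE)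
          (setIntegral_mono_set hint (.of_forall fun _ => by positivity) hsub.eventuallyLE)
    _ = 2 * ∫ ζ in Metric.ball (0 : ℂ) r, ‖ζ‖ ^ (-(3 / 2) : ℝ) := by
        rw [two_mul, setIntegral_ball_norm_sub_rpow_neg]

theorem pow_div_pow_succ_le_sqrt_mul_rpow {a d : ℝ} (hd : 0 ≤ d) (ha : 0 < a) (hda : d ≤ a)
    {k : ℕ} (hk : k ≠ 0) : d ^ k / a ^ (k + 1) ≤ √d * a ^ (-(3 / 2) : ℝ) := by
  have hq₀ : 0 ≤ d / a := by positivity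
  have hq₁ : d / a ≤ 1 := (div_le_one ha).2 hda
  have hrpow : a ^ (-(3 / 2) : ℝ) = a⁻¹ * (√a)⁻¹ := by
    rw [Real.sqrt_eq_rpow, ← Real.rpow_neg ha.le, ← Real.rpow_neg_one, ← Real.rpow_add ha]
    norm_num
  calc d ^ k / a ^ (k + 1) = a⁻¹ * (d / a) ^ k := by rw [div_pow, pow_succ]; field_simp
    _ ≤ a⁻¹ * (d / a) := by gcongr; exact pow_le_of_le_one hq₀ hq₁ hk
    _ ≤ a⁻¹ * √(d / a) := by
        gcongr
        exact Real.le_sqrt_of_sq_le (pow_le_of_le_one hq₀ hq₁ two_ne_zero)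
    _ = √d * a ^ (-(3 / 2) : ℝ) := by rw [Real.sqrt_div hd, hrpow]; ring

theorem inv_mul_rpow_le {a b : ℝ} (ha : 0 ≤ a) (hb : 0 ≤ b) (hab : 1 ≤ a + b) :
    a⁻¹ * b ^ (-(3 / 2) : ℝ) ≤ 4 * (a ^ (-(3 / 2) : ℝ) + b ^ (-(3 / 2) : ℝ)) := by
  have hpa : 0 ≤ a ^ (-(3 / 2) : ℝ) := by positivity
  have hpb : 0 ≤ b ^ (-(3 / 2) : ℝ) := by positivity
  rcases le_total (1 / 2) a with hhalf | hhalf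
  · have hinv : a⁻¹ ≤ 4 := inv_le_of_inv_le₀ (by norm_num) (by linarith)
    nlinarith
  · have hb_rpow : b ^ (-(3 / 2) : ℝ) ≤ 4 :=
      calc b ^ (-(3 / 2) : ℝ) ≤ (1 / 2 : ℝ) ^ (-(3 / 2) : ℝ) :=
            Real.rpow_le_rpow_of_nonpos (by norm_num) (by linarith) (by norm_num)
        _ ≤ (1 / 2 : ℝ) ^ (-2 : ℝ) :=
            Real.rpow_le_rpow_of_exponent_ge (by norm_num) (by norm_num) (by norm_num)
        _ = 4 := by norm_num [Real.rpow_neg]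
    have hinv : a⁻¹ ≤ a ^ (-(3 / 2) : ℝ) := by
      rcases ha.eq_or_lt with rfl | ha
      · simp
      · rw [← Real.rpow_neg_one]
        exact Real.rpow_le_rpow_of_exponent_ge ha (by linarith) (by norm_num)
    nlinarith

theorem norm_sub_one_lt_norm_sub {z ζ : ℂ} (hζ : ζ ∈ Metric.ball 0 1) : ‖z‖ - 1 < ‖ζ - z‖ := by
  have htri := norm_sub_norm_le z ζ
  rw [norm_sub_rev] at htri
  linarith [mem_ball_zero_iff.1 hζ]

variable {z ζ : ℂ}

theorem sq_mul_norm_inv_sub_pow_three_le (hz : 1 < ‖z‖) (hζ : ζ ∈ Metric.ball 0 1) :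
    (‖z‖ - 1) ^ 2 * ‖((ζ - z) ^ 3)⁻¹‖ ≤ √(‖z‖ - 1) * singularMajorant z ζ := by
  have hdist := norm_sub_one_lt_norm_sub (z := z) hζ
  have hd : 0 < ‖z‖ - 1 := sub_pos.2 hz
  rw [norm_inv, norm_pow, ← div_eq_mul_inv]
  refine (pow_div_pow_succ_le_sqrt_mul_rpow hd.le (hd.trans hdist) hdist.le two_ne_zero).trans ?_
  unfold singularMajorant
  gcongr
  exact le_add_of_nonneg_left (by positivity)

theorem mul_norm_inv_mul_sub_sq_le (hz : 1 < ‖z‖) (hζ : ζ ∈ Metric.ball 0 1) :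
    (‖z‖ - 1) * ‖(ζ * (ζ - z) ^ 2)⁻¹‖ ≤ 4 * √(‖z‖ - 1) * singularMajorant z ζ := by
  have hdist := norm_sub_one_lt_norm_sub (z := z) hζ
  have hd : 0 < ‖z‖ - 1 := sub_pos.2 hz
  have hpos : 0 < ‖ζ - z‖ := hd.trans hdist
  have hsing := pow_div_pow_succ_le_sqrt_mul_rpow hd.le hpos hdist.le one_ne_zero
  have hadd : 1 ≤ ‖ζ‖ + ‖ζ - z‖ := by
    have htri := norm_sub_le ζ (ζ - z)
    rw [sub_sub_cancel] at htri
    linarith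
  calc (‖z‖ - 1) * ‖(ζ * (ζ - z) ^ 2)⁻¹‖
      = ‖ζ‖⁻¹ * ((‖z‖ - 1) ^ 1 / ‖ζ - z‖ ^ (1 + 1)) := by
        rw [norm_inv, norm_mul, norm_pow, mul_inv]; ring
    _ ≤ ‖ζ‖⁻¹ * (√(‖z‖ - 1) * ‖ζ - z‖ ^ (-(3 / 2) : ℝ)) := by gcongr
    _ = √(‖z‖ - 1) * (‖ζ‖⁻¹ * ‖ζ - z‖ ^ (-(3 / 2) : ℝ)) := by ring
    _ ≤ √(‖z‖ - 1) * (4 * singularMajorant z ζ) :=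
        mul_le_mul_of_nonneg_left (inv_mul_rpow_le (norm_nonneg ζ) hpos.le hadd)
          (Real.sqrt_nonneg _)
    _ = 4 * √(‖z‖ - 1) * singularMajorant z ζ := by ring

theorem integrableOn_ball_inv_sub_pow_three (hz : 1 < ‖z‖) :
    IntegrableOn (fun ζ => ((ζ - z) ^ 3)⁻¹) (Metric.ball 0 1) :=
  integrable_of_mul_norm_le (pow_pos (sub_pos.2 hz) 2)
    ((integrableOn_singularMajorant z).const_mul _)
    (Measurable.aestronglyMeasurable (by fun_prop)) <|
      (ae_restrict_iff' measurableSet_ball).2 <|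
        .of_forall fun _ => sq_mul_norm_inv_sub_pow_three_le hz

theorem integrableOn_ball_inv_mul_sub_sq (hz : 1 < ‖z‖) :
    IntegrableOn (fun ζ => (ζ * (ζ - z) ^ 2)⁻¹) (Metric.ball 0 1) :=
  integrable_of_mul_norm_le (sub_pos.2 hz) ((integrableOn_singularMajorant z).const_mul _)
    (Measurable.aestronglyMeasurable (by fun_prop)) <|
      (ae_restrict_iff' measurableSet_ball).2 <|
        .of_forall fun _ => mul_norm_inv_mul_sub_sq_le hz

end DiskKernel

section BeurlingTransform

/-- The term `R` that has to be added to the disk transform `TderivDisk μ` in order to obtain, up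
to the factor `ξ'`, the half-plane transform of the pullback of `μ`. -/
noncomputable def TderivCorrection (μ : ℂ → ℂ) (z : ℂ) : ℂ :=
  1 / (Real.pi : ℂ) * ∫ ζ in Metric.ball (0 : ℂ) 1, μ ζ / (ζ * (ζ - z) ^ 2)

variable {μ : ℂ → ℂ} {K : ℝ} {z w : ℂ}

theorem sq_mul_norm_TderivDisk_le (hK : ∀ᵐ ζ ∂volume.restrict (Metric.ball 0 1), ‖μ ζ‖ ≤ K)
    (hz : 1 < ‖z‖) :
    (‖z‖ - 1) ^ 2 * ‖TderivDisk μ z‖ ≤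
      2 / Real.pi * K * (∫ ζ in Metric.ball 0 1, singularMajorant z ζ) * √(‖z‖ - 1) := by
  have hbound := mul_norm_integral_mul_le (sq_nonneg (‖z‖ - 1))
    ((integrableOn_singularMajorant z).const_mul √(‖z‖ - 1)) hK <|
      (ae_restrict_iff' measurableSet_ball).2 <|
        .of_forall fun _ => sq_mul_norm_inv_sub_pow_three_le hz
  have hnorm : ‖-(2 / (Real.pi : ℂ))‖ = 2 / Real.pi := by simp [abs_of_pos Real.pi_pos]
  rw [integral_const_mul] at hbound
  simp only [← div_eq_mul_inv] at hbound
  rw [TderivDisk, norm_mul, hnorm, mul_left_comm]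
  refine (mul_le_mul_of_nonneg_left hbound (by positivity)).trans_eq ?_
  ring

theorem mul_norm_TderivCorrection_le
    (hK : ∀ᵐ ζ ∂volume.restrict (Metric.ball 0 1), ‖μ ζ‖ ≤ K) (hz : 1 < ‖z‖) :
    (‖z‖ - 1) * ‖TderivCorrection μ z‖ ≤
      4 / Real.pi * K * (∫ ζ in Metric.ball 0 1, singularMajorant z ζ) * √(‖z‖ - 1) := by
  have hbound := mul_norm_integral_mul_le (sub_pos.2 hz).le
    ((integrableOn_singularMajorant z).const_mul (4 * √(‖z‖ - 1))) hK <|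
      (ae_restrict_iff' measurableSet_ball).2 <|
        .of_forall fun _ => mul_norm_inv_mul_sub_sq_le hz
  have hnorm : ‖1 / (Real.pi : ℂ)‖ = 1 / Real.pi := by simp [abs_of_pos Real.pi_pos]
  rw [integral_const_mul] at hbound
  simp only [← div_eq_mul_inv] at hbound
  rw [TderivCorrection, norm_mul, hnorm, mul_left_comm]
  refine (mul_le_mul_of_nonneg_left hbound (by positivity)).trans_eq ?_
  ring

theorem TderivHalf_nuPull (hμ : AEStronglyMeasurable μ (volume.restrict (Metric.ball 0 1)))
    (hK : ∀ᵐ ζ ∂volume.restrict (Metric.ball 0 1), ‖μ ζ‖ ≤ K) (hw : 0 < w.im) :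
    TderivHalf (nuPull μ) w =
      deriv xiExp w * (TderivDisk μ (xiExp w) + TderivCorrection μ (xiExp w)) := by
  have hz := one_lt_norm_xiExp_iff.2 hw
  have hint₃ := (integrableOn_ball_inv_sub_pow_three hz).bdd_mul hμ hK
  have hint₂ := (integrableOn_ball_inv_mul_sub_sq hz).bdd_mul hμ hK
  have hperiod : ∫ ζ in {ζ : ℂ | ζ.im < 0}, nuPull μ ζ / (ζ - w) ^ 3 =
      ∫ η in lowerStrip 0, nuPull μ η * ∑' n : ℤ, 1 / (η - w + n) ^ 3 := by
    rw [setIntegral_im_neg_eq_setIntegral_lowerStrip_tsum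
      (integrableOn_nuPull_div_sub_pow_three hμ hK hw)]
    simp only [nuPull_add_intCast, ← tsum_mul_left, mul_one_div, add_sub_right_comm]
  have hdisk : ∫ ζ in {ζ : ℂ | ζ.im < 0}, nuPull μ ζ / (ζ - w) ^ 3 =
      ∫ ζ in Metric.ball (0 : ℂ) 1, deriv xiExp w * (μ ζ / (ζ - xiExp w) ^ 3 -
        1 / 2 * (μ ζ / (ζ * (ζ - xiExp w) ^ 2))) := by
    rw [hperiod, setIntegral_ball_eq_setIntegral_lowerStrip 0]
    exact setIntegral_congr_fun (measurableSet_lowerStrip 0) fun η hη => nuPull_mul_tsum hη.2 hw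
  simp only [← div_eq_mul_inv] at hint₃ hint₂
  rw [TderivHalf, hdisk, integral_const_mul, integral_sub hint₃ (hint₂.const_mul _),
    integral_const_mul, TderivDisk, TderivCorrection]
  ring

end BeurlingTransform

section Comparison

theorem sub_one_le_mul_log {ρ : ℝ} (hρ : 0 < ρ) : ρ - 1 ≤ ρ * Real.log ρ := by
  have hmul := mul_le_mul_of_nonneg_left (Real.one_sub_inv_le_log_of_pos hρ) hρ.le
  rwa [mul_sub, mul_one, mul_inv_cancel₀ hρ.ne'] at hmul

theorem mul_log_le {ρ : ℝ} (hρ : 0 ≤ ρ) : ρ * Real.log ρ ≤ ρ * (ρ - 1) := by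
  rcases hρ.eq_or_lt with rfl | hρ
  · simp
  · gcongr
    exact Real.log_le_sub_one_of_pos hρ

theorem abs_two_mul_mul_log_sub_sq_sub_one_le {ρ : ℝ} (hρ : 0 < ρ) :
    |2 * ρ * Real.log ρ - (ρ ^ 2 - 1)| ≤ (ρ - 1) ^ 2 := by
  have hlower := sub_one_le_mul_log hρ
  have hupper := mul_log_le hρ.le
  rw [abs_le]
  constructor <;> linarith

theorem abs_two_mul_mul_log_mul_norm_add_sub_le {E : Type*} [SeminormedAddCommGroup E] {ρ : ℝ}
    (hρ₁ : 1 ≤ ρ) (hρ₂ : ρ ≤ 2) (T R : E) :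
    |2 * ρ * Real.log ρ * ‖T + R‖ - (ρ ^ 2 - 1) * ‖T‖| ≤
      4 * ((ρ - 1) * ‖R‖) + (ρ - 1) ^ 2 * ‖T‖ := by
  have hlog₀ : 0 ≤ 2 * ρ * Real.log ρ := by have := Real.log_nonneg hρ₁; positivity
  have hlog : 2 * ρ * Real.log ρ ≤ 4 * (ρ - 1) := by
    nlinarith [mul_log_le (zero_le_one.trans hρ₁)]
  have hR : |‖T + R‖ - ‖T‖| ≤ ‖R‖ := by simpa using abs_norm_sub_norm_le (T + R) T
  calc |2 * ρ * Real.log ρ * ‖T + R‖ - (ρ ^ 2 - 1) * ‖T‖|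
      = |2 * ρ * Real.log ρ * (‖T + R‖ - ‖T‖) + (2 * ρ * Real.log ρ - (ρ ^ 2 - 1)) * ‖T‖| := by
        ring_nf
    _ ≤ 2 * ρ * Real.log ρ * |‖T + R‖ - ‖T‖| + |2 * ρ * Real.log ρ - (ρ ^ 2 - 1)| * ‖T‖ := by
        grw [abs_add_le]
        rw [abs_mul _ ‖T‖, abs_norm, abs_mul _ (‖T + R‖ - ‖T‖), abs_of_nonneg hlog₀]
    _ ≤ 4 * (ρ - 1) * ‖R‖ + (ρ - 1) ^ 2 * ‖T‖ := by
        grw [abs_two_mul_mul_log_sub_sq_sub_one_le (zero_lt_one.trans_le hρ₁), hR, hlog]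
    _ = 4 * ((ρ - 1) * ‖R‖) + (ρ - 1) ^ 2 * ‖T‖ := by ring

theorem norm_xiExp_le_two {w : ℂ} (hw : w.im ≤ 1 / 10) : ‖xiExp w‖ ≤ 2 := by
  rw [norm_xiExp, ← Real.le_log_iff_exp_le two_pos]
  nlinarith [Real.pi_lt_d2, Real.pi_pos, Real.log_two_gt_d9]

theorem norm_xiExp_sub_one_le {w : ℂ} (hw₀ : 0 ≤ w.im) (hw : w.im ≤ 1 / 10) :
    ‖xiExp w‖ - 1 ≤ 16 * w.im :=
  calc ‖xiExp w‖ - 1 ≤ ‖xiExp w‖ * (2 * Real.pi * w.im) :=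
        log_norm_xiExp w ▸ sub_one_le_mul_log (norm_pos_iff.2 (xiExp_ne_zero w))
    _ ≤ 2 * (2 * 4 * w.im) := by
        gcongr
        exacts [norm_xiExp_le_two hw, Real.pi_lt_four.le]
    _ = 16 * w.im := by ring

theorem abs_im_mul_norm_TderivHalf_sub_norm_TderivDisk_le {μ : ℂ → ℂ} {K : ℝ} {w : ℂ}
    (hμ : AEStronglyMeasurable μ (volume.restrict (Metric.ball 0 1)))
    (hK : ∀ᵐ ζ ∂volume.restrict (Metric.ball 0 1), ‖μ ζ‖ ≤ K)
    (hw₀ : 0 < w.im) (hw : w.im ≤ 1 / 10) :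
    |2 * w.im * ‖TderivHalf (nuPull μ) w‖ -
      (‖xiExp w‖ ^ 2 - 1) * ‖TderivDisk μ (xiExp w)‖| ≤
      144 / Real.pi * K * (∫ ζ in Metric.ball (0 : ℂ) 3, ‖ζ‖ ^ (-(3 / 2) : ℝ)) * √w.im := by
  set z := xiExp w
  have hz₁ : 1 < ‖z‖ := one_lt_norm_xiExp_iff.2 hw₀
  have hz₂ : ‖z‖ ≤ 2 := norm_xiExp_le_two hw
  have hK₀ : 0 ≤ K := by
    have : (ae (volume.restrict (Metric.ball (0 : ℂ) 1))).NeBot :=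
      ae_restrict_neBot.2 (Metric.measure_ball_pos volume 0 one_pos).ne'
    obtain ⟨ζ, hζ⟩ := hK.exists
    exact (norm_nonneg _).trans hζ
  have hdensity : 2 * w.im * ‖deriv xiExp w‖ = 2 * ‖z‖ * Real.log ‖z‖ := by
    rw [norm_deriv_xiExp, log_norm_xiExp]
    ring
  have hsqrt : √(‖z‖ - 1) ≤ 4 * √w.im :=
    calc √(‖z‖ - 1) ≤ √(4 ^ 2 * w.im) :=
          Real.sqrt_le_sqrt ((norm_xiExp_sub_one_le hw₀.le hw).trans_eq (by norm_num))
      _ = 4 * √w.im := by rw [Real.sqrt_mul (by positivity), Real.sqrt_sq (by norm_num)]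
  rw [TderivHalf_nuPull hμ hK hw₀, norm_mul, ← mul_assoc, hdensity]
  calc |2 * ‖z‖ * Real.log ‖z‖ * ‖TderivDisk μ z + TderivCorrection μ z‖ -
        (‖z‖ ^ 2 - 1) * ‖TderivDisk μ z‖|
      ≤ 4 * ((‖z‖ - 1) * ‖TderivCorrection μ z‖) + (‖z‖ - 1) ^ 2 * ‖TderivDisk μ z‖ :=
        abs_two_mul_mul_log_mul_norm_add_sub_le hz₁.le hz₂ _ _
    _ ≤ 4 * (4 / Real.pi * K * (∫ ζ in Metric.ball 0 1, singularMajorant z ζ) * √(‖z‖ - 1)) +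
          2 / Real.pi * K * (∫ ζ in Metric.ball 0 1, singularMajorant z ζ) * √(‖z‖ - 1) :=
        add_le_add (mul_le_mul_of_nonneg_left (mul_norm_TderivCorrection_le hK hz₁) (by norm_num))
          (sq_mul_norm_TderivDisk_le hK hz₁)
    _ = 18 / Real.pi * K * (∫ ζ in Metric.ball 0 1, singularMajorant z ζ) * √(‖z‖ - 1) := by ring
    _ ≤ 18 / Real.pi * K * (2 * ∫ ζ in Metric.ball (0 : ℂ) 3, ‖ζ‖ ^ (-(3 / 2) : ℝ)) *
          (4 * √w.im) := by
        gcongr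
        exact setIntegral_singularMajorant_le (by linarith)
    _ = _ := by ring

end Comparison

theorem stmt13_general (K : ℝ) {ε : ℝ} (hε : 0 < ε) :
    ∃ δ : ℝ, 0 < δ ∧ ∀ μ : ℂ → ℂ, AEStronglyMeasurable μ (volume.restrict (Metric.ball 0 1)) →
      (∀ᵐ ζ ∂volume.restrict (Metric.ball 0 1), ‖μ ζ‖ ≤ K) → ∀ w : ℂ, 0 < w.im → w.im < δ →
        |2 * w.im * ‖TderivHalf (nuPull μ) w‖ -
          (‖xiExp w‖ ^ 2 - 1) * ‖TderivDisk μ (xiExp w)‖| < ε := by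
  set C := 144 / Real.pi * K * ∫ ζ in Metric.ball (0 : ℂ) 3, ‖ζ‖ ^ (-(3 / 2) : ℝ)
  have hlim : Tendsto (fun y : ℝ => C * √y) (𝓝[>] 0) (𝓝 0) := by
    have hcont : Continuous fun y : ℝ => C * √y := by fun_prop
    simpa using (hcont.tendsto 0).mono_left nhdsWithin_le_nhds
  obtain ⟨δ, hδ, hsub⟩ := mem_nhdsGT_iff_exists_Ioo_subset.1
    ((hlim.eventually_lt_const hε).and (Ioo_mem_nhdsGT (by norm_num : (0 : ℝ) < 1 / 10)))
  refine ⟨δ, hδ, fun μ hμ hK w hw₀ hw => ?_⟩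
  obtain ⟨hlt, -, hle⟩ := hsub ⟨hw₀, hw⟩
  exact (abs_im_mul_norm_TderivHalf_sub_norm_TderivDisk_le hμ hK hw₀ hle.le).trans_lt hlt

theorem stmt13 (μ : ℂ → ℂ) (hmeas : Measurable μ)
    (hbd : ∀ᵐ ζ : ℂ, ‖μ ζ‖ ≤ 1)
    (hsupp : ∀ ζ : ℂ, ζ ∉ Metric.ball (0:ℂ) 1 → μ ζ = 0) :
    ∀ ε : ℝ, 0 < ε → ∃ δ : ℝ, 0 < δ ∧ ∀ w : ℂ, 0 < w.im → w.im < δ →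
      |2 * w.im * ‖TderivHalf (nuPull μ) w‖ -
        (‖xiExp w‖^2 - 1) * ‖TderivDisk μ (xiExp w)‖| < ε := fun _ hε =>
  (stmt13_general 1 hε).imp fun _ hδ =>
    ⟨hδ.1, hδ.2 μ hmeas.aestronglyMeasurable (ae_restrict_of_ae hbd)⟩
end

section
/- Let M > 0 and let b : 𝔻 × 𝔻 → ℂ (where 𝔻 is the open unit disk) be such that: for each t ∈ 𝔻 the map z ↦ b(t, z) is holomorphic on 𝔻; for each z ∈ 𝔻 the map t ↦ b(t, z) is holomorphic on 𝔻; and sup_{t∈𝔻} [ |b(t, 0)| + sup_{z∈𝔻} (1 − |z|²)|∂_z b(t, z)| ] ≤ M. Let g be holomorphic and Lebesgue-integrable on 𝔻 (i.e. g belongs to the Bergman space A¹). Then for each t ∈ 𝔻 the limit F(t) := lim_{r→1⁻} (1/π) ∫_𝔻 b(t, z) · conj(g(rz)) dA(z) exists, and the function F is holomorphic on 𝔻. -/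
open Complex MeasureTheory Filter Topology Set Metric

/-
For a Bloch function `f`, the functions `f` and `T f = (1 - |z|²) (2 f + z ∂f)` differ by
`∂[(1 - |z|²) z f]`, the derivative of a function vanishing on the unit circle. By Stokes' theorem
they have the same pairing with every `h` holomorphic across the circle; here this is checked on the
monomials `h = zⁿ`, in polar coordinates. The logarithmic growth `|f| ≤ M - M log (1 - |z|)` makes
`T f` bounded by `5 M`. With `g_r(z) = g(r z)` it follows that `⟨b_t, g_r⟩ = ⟨T b_t, g_r⟩`, which
tends to `⟨T b_t, g⟩` uniformly in `t`, because `g_r → g` in `L¹`. Each `⟨b_t, g_r⟩` is holomorphic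
in `t`, and hence so is the uniform limit.
-/

section

open scoped ComplexConjugate Real

theorem aestronglyMeasurable_deriv_of_ae_differentiableAt {𝕜 α E : Type*}
    [NontriviallyNormedField 𝕜] [MeasurableSpace α] {μ : Measure α} [NormedAddCommGroup E]
    [NormedSpace 𝕜 E] {u : 𝕜 → α → E} {t₀ : 𝕜}
    (hmeas : ∀ᶠ t in 𝓝 t₀, AEStronglyMeasurable (u t) μ)
    (hdiff : ∀ᵐ x ∂μ, DifferentiableAt 𝕜 (u · x) t₀) :
    AEStronglyMeasurable (fun x => deriv (u · x) t₀) μ := by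
  classical
  let v : 𝕜 → α → E := fun t x =>
    if AEStronglyMeasurable (u t) μ then slope (u · x) t₀ t else 0
  refine aestronglyMeasurable_of_tendsto_ae (𝓝[≠] t₀) (f := v) (fun t => ?_) ?_
  · by_cases ht : AEStronglyMeasurable (u t) μ
    · simp only [v, ht, if_true, slope_def_module]
      exact (ht.sub hmeas.self_of_nhds).const_smul _
    · simp only [v, ht, if_false]
      exact aestronglyMeasurable_const
  · filter_upwards [hdiff] with x hx
    refine hx.hasDerivAt.tendsto_slope.congr' ?_
    filter_upwards [nhdsWithin_le_nhds hmeas] with t ht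
    simp only [v, ht, if_true]

theorem differentiableOn_integral_of_dominated {α E : Type*} [MeasurableSpace α]
    {μ : Measure α} [NormedAddCommGroup E] [NormedSpace ℂ E] {U : Set ℂ} (hU : IsOpen U)
    {u : ℂ → α → E} {B : α → ℝ} (hB : Integrable B μ)
    (hmeas : ∀ t ∈ U, AEStronglyMeasurable (u t) μ)
    (hdiff : ∀ᵐ x ∂μ, DifferentiableOn ℂ (u · x) U)
    (hbound : ∀ᵐ x ∂μ, ∀ t ∈ U, ‖u t x‖ ≤ B x) :
    DifferentiableOn ℂ (fun t => ∫ x, u t x ∂μ) U := by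
  intro t₀ ht₀
  obtain ⟨δ, hδ, hsub⟩ : ∃ δ > 0, ball t₀ (δ + δ) ⊆ U := by
    obtain ⟨ε, hε, h⟩ := Metric.isOpen_iff.1 hU t₀ ht₀
    exact ⟨ε / 2, half_pos hε, by rwa [add_halves]⟩
  have hmeas' : ∀ᶠ t in 𝓝 t₀, AEStronglyMeasurable (u t) μ := by
    filter_upwards [hU.mem_nhds ht₀] with t ht using hmeas t ht
  have hclosedBall : ∀ t ∈ ball t₀ δ, closedBall t δ ⊆ U := fun t ht =>
    (closedBall_subset_ball' (by linarith [mem_ball.1 ht])).trans hsub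
  have hderiv : ∀ᵐ x ∂μ, ∀ t ∈ ball t₀ δ, HasDerivAt (u · x) (deriv (u · x) t) t := by
    filter_upwards [hdiff] with x hx t ht
    exact (hx.differentiableAt (hU.mem_nhds
      (hclosedBall t ht (mem_closedBall_self hδ.le)))).hasDerivAt
  have hcauchy : ∀ᵐ x ∂μ, ∀ t ∈ ball t₀ δ, ‖deriv (u · x) t‖ ≤ B x / δ := by
    filter_upwards [hdiff, hbound] with x hx hxB t ht
    exact norm_deriv_le_of_forall_mem_sphere_norm_le hδ
      ((hx.mono (hclosedBall t ht)).diffContOnCl_ball subset_rfl)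
      fun z hz => hxB z (hclosedBall t ht (sphere_subset_closedBall hz))
  have hint : Integrable (u t₀) μ :=
    hB.mono' (hmeas t₀ ht₀) (hbound.mono fun x hx => hx t₀ ht₀)
  exact (hasDerivAt_integral_of_dominated_loc_of_deriv_le (ball_mem_nhds t₀ hδ) hmeas' hint
    (aestronglyMeasurable_deriv_of_ae_differentiableAt hmeas'
      (hderiv.mono fun x hx => (hx t₀ (mem_ball_self hδ)).differentiableAt))
    hcauchy (hB.div_const δ) hderiv).2.differentiableAt.differentiableWithinAt

section Dilation

variable {E F : Type*} [NormedAddCommGroup E] [NormedSpace ℝ E] [FiniteDimensional ℝ E]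
  [MeasurableSpace E] [BorelSpace E] {μ : Measure E} [NormedAddCommGroup F] {f g : E → F}

theorem tendsto_integral_norm_comp_smul_sub_of_hasCompactSupport
    [IsFiniteMeasureOnCompacts μ] (hf : HasCompactSupport f) (hcont : Continuous f) :
    Tendsto (fun r : ℝ => ∫ x, ‖f (r • x) - f x‖ ∂μ) (𝓝 1) (𝓝 0) := by
  obtain ⟨R, hR⟩ := hf.isCompact.isBounded.subset_closedBall 0
  have hzero : ∀ y, R < ‖y‖ → f y = 0 := fun y hy =>
    image_eq_zero_of_notMem_tsupport fun hy' => hy.not_ge (mem_closedBall_zero_iff.1 (hR hy'))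
  have hvanish : ∀ (r : ℝ) (x : E), r ∈ Ioi (1 / 2) → x ∉ closedBall (0 : E) (2 * |R|) →
      ‖f (r • x) - f x‖ = 0 := by
    intro r x hr hx
    rw [mem_Ioi] at hr
    rw [mem_closedBall_zero_iff, not_le] at hx
    rw [hzero x (by linarith [le_abs_self R, abs_nonneg R]), hzero (r • x), sub_zero, norm_zero]
    rw [norm_smul, Real.norm_of_nonneg (by linarith)]
    nlinarith [le_abs_self R, abs_nonneg R]
  have hcontOn : ContinuousOn (fun r : ℝ => ∫ x, ‖f (r • x) - f x‖ ∂μ) (Ioi (1 / 2)) :=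
    continuousOn_integral_of_compact_support (isCompact_closedBall 0 (2 * |R|))
      (by simp only [Function.uncurry_def]; fun_prop) hvanish
  simpa using (hcontOn.continuousAt (Ioi_mem_nhds (by norm_num : (1 / 2 : ℝ) < 1))).tendsto

theorem integral_norm_comp_smul_sub_le [μ.IsAddHaarMeasure] (hf : Integrable f μ)
    (hg : Integrable g μ) {r : ℝ} (hr : r ≠ 0) :
    ∫ x, ‖f (r • x) - f x‖ ∂μ ≤ |(r ^ Module.finrank ℝ E)⁻¹| * ∫ x, ‖f x - g x‖ ∂μ +
      ∫ x, ‖g (r • x) - g x‖ ∂μ + ∫ x, ‖f x - g x‖ ∂μ := by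
  have hsub : Integrable (fun x => ‖f x - g x‖) μ := (hf.sub hg).norm
  have hsubr : Integrable (fun x => ‖f (r • x) - g (r • x)‖) μ := hsub.comp_smul hr
  have hgr : Integrable (fun x => ‖g (r • x) - g x‖) μ := ((hg.comp_smul hr).sub hg).norm
  have hsum : Integrable (fun x => ‖f (r • x) - g (r • x)‖ + ‖g (r • x) - g x‖) μ :=
    hsubr.add hgr
  calc ∫ x, ‖f (r • x) - f x‖ ∂μ
      ≤ ∫ x, (‖f (r • x) - g (r • x)‖ + ‖g (r • x) - g x‖) + ‖f x - g x‖ ∂μ := by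
        refine integral_mono ((hf.comp_smul hr).sub hf).norm (hsum.add hsub) fun x => ?_
        calc ‖f (r • x) - f x‖
            = ‖(f (r • x) - g (r • x)) + (g (r • x) - g x) - (f x - g x)‖ := by congr 1; abel
          _ ≤ _ := (norm_sub_le _ _).trans (by gcongr; exact norm_add_le _ _)
    _ = _ := by
        rw [integral_add hsum hsub, integral_add hsubr hgr,
          Measure.integral_comp_smul μ (fun x => ‖f x - g x‖), smul_eq_mul]

theorem tendsto_integral_norm_comp_smul_sub [μ.IsAddHaarMeasure] [NormedSpace ℝ F]
    (hf : Integrable f μ) :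
    Tendsto (fun r : ℝ => ∫ x, ‖f (r • x) - f x‖ ∂μ) (𝓝 1) (𝓝 0) := by
  refine (nhds_basis_zero_abs_lt ℝ).tendsto_right_iff.2 fun ε hε => ?_
  have hε4 : 0 < ε / 4 := by positivity
  obtain ⟨g, hgsupp, hfg, hgcont, hgint⟩ := hf.exists_hasCompactSupport_integral_sub_le hε4
  have hscale : Tendsto (fun r : ℝ => |(r ^ Module.finrank ℝ E)⁻¹|) (𝓝 1) (𝓝 1) := by
    have hcont : ContinuousAt (fun r : ℝ => |(r ^ Module.finrank ℝ E)⁻¹|) 1 :=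
      ((continuousAt_id.pow _).inv₀ (by simp)).abs
    simpa [ContinuousAt] using hcont
  have hdilation : Tendsto (fun r : ℝ => ∫ x, ‖g (r • x) - g x‖ ∂μ) (𝓝 1) (𝓝 0) :=
    tendsto_integral_norm_comp_smul_sub_of_hasCompactSupport hgsupp hgcont
  filter_upwards [hscale.eventually_lt_const one_lt_two, Ioi_mem_nhds one_pos,
    hdilation.eventually_lt_const hε4] with r hr2 hr0 hrg
  rw [abs_of_nonneg (by positivity)]
  calc ∫ x, ‖f (r • x) - f x‖ ∂μ
      ≤ |(r ^ Module.finrank ℝ E)⁻¹| * ∫ x, ‖f x - g x‖ ∂μ +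
          ∫ x, ‖g (r • x) - g x‖ ∂μ + ∫ x, ‖f x - g x‖ ∂μ :=
        integral_norm_comp_smul_sub_le hf hgint (mem_Ioi.1 hr0).ne'
    _ ≤ 2 * (ε / 4) + ∫ x, ‖g (r • x) - g x‖ ∂μ + ε / 4 := by gcongr
    _ < ε := by linarith

theorem tendsto_setIntegral_norm_comp_smul_sub_of_starConvex [μ.IsAddHaarMeasure]
    [NormedSpace ℝ F] {s : Set E} (hs : StarConvex ℝ 0 s) (hmeas : MeasurableSet s)
    (hf : IntegrableOn f s μ) :
    Tendsto (fun r : ℝ => ∫ x in s, ‖f (r • x) - f x‖ ∂μ) (𝓝[<] 1) (𝓝 0) := by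
  have hind : Integrable (s.indicator f) μ := hf.integrable_indicator hmeas
  refine squeeze_zero' (Eventually.of_forall fun r => by positivity) ?_
    ((tendsto_integral_norm_comp_smul_sub hind).mono_left nhdsWithin_le_nhds)
  filter_upwards [Ioo_mem_nhdsLT one_pos] with r hr
  calc ∫ x in s, ‖f (r • x) - f x‖ ∂μ
      = ∫ x in s, ‖s.indicator f (r • x) - s.indicator f x‖ ∂μ := by
        refine setIntegral_congr_fun hmeas fun x hx => ?_
        have hrx : r • x ∈ s := hs.smul_mem hx hr.1.le hr.2.le
        simp only [indicator_of_mem hx, indicator_of_mem hrx]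
    _ ≤ ∫ x, ‖s.indicator f (r • x) - s.indicator f x‖ ∂μ :=
        setIntegral_le_integral ((hind.comp_smul hr.1.ne').sub hind).norm
          (Eventually.of_forall fun x => norm_nonneg _)

end Dilation

section Polar

variable {E : Type*} [NormedAddCommGroup E] [NormedSpace ℝ E]

theorem integrableOn_polarCoord_symm {φ : ℂ → E} (hφ : Integrable φ) :
    IntegrableOn (fun p => p.1 • φ (Complex.polarCoord.symm p)) (Ioi 0 ×ˢ Ioo (-π) π) := by
  have hreal : Integrable (φ ∘ measurableEquivRealProd.symm) :=
    (volume_preserving_equiv_real_prod.symm.integrable_comp_emb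
      measurableEquivRealProd.symm.measurableEmbedding).2 hφ
  have himage : IntegrableOn (φ ∘ measurableEquivRealProd.symm)
      (polarCoord.symm '' polarCoord.target) := hreal.integrableOn
  rw [integrableOn_image_iff_integrableOn_abs_det_fderiv_smul volume
    polarCoord.open_target.measurableSet
    (fun p _ => (hasFDerivAt_polarCoord_symm p).hasFDerivWithinAt) polarCoord.symm.injOn] at himage
  refine himage.congr_fun (fun p hp => ?_) polarCoord.open_target.measurableSet
  simp only [Function.comp_apply, det_fderivPolarCoordSymm, abs_of_pos (mem_Ioi.1 hp.1),
    measurableEquivRealProd_symm_polarCoord_symm_apply]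

theorem integral_polarCoord_symm_eq_circleAverage (φ : ℂ → E) (ρ : ℝ) :
    ∫ θ in Ioo (-π) π, φ (Complex.polarCoord.symm (ρ, θ)) =
      (2 * π) • Real.circleAverage φ 0 ρ := by
  have hpolar : ∀ θ, Complex.polarCoord.symm (ρ, θ) = circleMap 0 ρ θ := fun θ => by
    rw [Complex.polarCoord_symm_apply, circleMap_zero, exp_mul_I, ofReal_cos, ofReal_sin]
  rw [Real.circleAverage_eq_integral_add (-π), smul_inv_smul₀ Real.two_pi_pos.ne',
    intervalIntegral.integral_comp_add_right (fun θ => φ (circleMap 0 ρ θ)), zero_add,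
    show 2 * π + -π = π by ring, intervalIntegral.integral_of_le (by linarith [Real.pi_pos]),
    integral_Ioc_eq_integral_Ioo]
  simp only [hpolar]

theorem integral_eq_integral_circleAverage {φ : ℂ → E} (hφ : Integrable φ) :
    ∫ z, φ z = ∫ ρ in Ioi (0 : ℝ), (2 * π * ρ) • Real.circleAverage φ 0 ρ := by
  rw [← Complex.integral_comp_polarCoord_symm, polarCoord_target, Measure.volume_eq_prod,
    setIntegral_prod _ (integrableOn_polarCoord_symm hφ)]
  refine integral_congr_ae (Eventually.of_forall fun ρ => ?_)
  dsimp only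
  rw [integral_smul, integral_polarCoord_symm_eq_circleAverage, smul_smul, mul_comm]

theorem setIntegral_ball_eq_integral_circleAverage {φ : ℂ → E} {R : ℝ} (hR : 0 ≤ R)
    (hφ : IntegrableOn φ (ball 0 R)) :
    ∫ z in ball 0 R, φ z = ∫ ρ in 0..R, (2 * π * ρ) • Real.circleAverage φ 0 ρ := by
  rw [← integral_indicator measurableSet_ball,
    integral_eq_integral_circleAverage (hφ.integrable_indicator measurableSet_ball),
    intervalIntegral.integral_of_le hR, integral_Ioc_eq_integral_Ioo,
    ← Ioi_inter_Iio, ← setIntegral_indicator measurableSet_Iio]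
  refine setIntegral_congr_fun measurableSet_Ioi fun ρ hρ => ?_
  have hnorm : ∀ z ∈ sphere (0 : ℂ) |ρ|, ‖z‖ = ρ := fun z hz => by
    rw [mem_sphere_zero_iff_norm.1 hz, abs_of_pos hρ]
  by_cases hρR : ρ < R
  · rw [indicator_of_mem (show ρ ∈ Iio R from hρR)]
    refine congrArg _ (Real.circleAverage_congr_sphere fun z hz => ?_)
    exact indicator_of_mem (mem_ball_zero_iff.2 ((hnorm z hz).trans_lt hρR)) φ
  · rw [indicator_of_notMem (show ρ ∉ Iio R from hρR),
      Real.circleAverage_congr_sphere (f₂ := fun _ => 0) fun z hz => indicator_of_notMem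
        (fun hz' => hρR ((hnorm z hz).symm.trans_lt (mem_ball_zero_iff.1 hz'))) φ,
      Real.circleAverage_def, intervalIntegral.integral_zero, smul_zero, smul_zero]

end Polar

theorem circleAverage_sub_smul_deriv_eq_zero {E : Type*} [NormedAddCommGroup E] [NormedSpace ℂ E]
    [CompleteSpace E] {G : ℂ → E} {c : ℂ} {R : ℝ}
    (hG : ∀ z ∈ sphere c |R|, DifferentiableAt ℂ G z) :
    Real.circleAverage (fun z => (z - c) • deriv G z) c R = 0 := by
  rcases eq_or_ne R 0 with rfl | hR
  · simp
  have hcancel : EqOn (fun z => (z - c)⁻¹ • (z - c) • deriv G z) (deriv G) (sphere c |R|) :=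
    fun z hz => inv_smul_smul₀ (sub_ne_zero.2 (ne_of_mem_sphere hz (abs_ne_zero.2 hR))) _
  have hzero : ∮ z in C(c, |R|), deriv G z = 0 :=
    circleIntegral.integral_eq_zero_of_hasDerivWithinAt' fun z hz =>
      (hG z (by rwa [abs_abs] at hz)).hasDerivAt.hasDerivWithinAt
  rw [← Real.circleAverage_abs_radius, Real.circleAverage_eq_circleIntegral (abs_ne_zero.2 hR),
    circleIntegral.integral_congr (abs_nonneg R) hcancel, hzero, smul_zero]

section ConjPow

variable {f : ℂ → ℂ} {ρ : ℝ}

theorem conj_pow_eq_mul_inv_pow {z : ℂ} (hz : z ∈ sphere (0 : ℂ) ρ) (hρ : ρ ≠ 0) (n : ℕ) :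
    conj z ^ n = (ρ : ℂ) ^ (2 * n) * z ^ (-n : ℤ) := by
  have hz0 : z ≠ 0 := ne_of_mem_sphere hz hρ
  rw [zpow_neg, zpow_natCast, eq_mul_inv_iff_mul_eq₀ (pow_ne_zero n hz0), ← mul_pow, conj_mul',
    mem_sphere_zero_iff_norm.1 hz, pow_mul]

theorem circleIntegrable_mul_conj_pow (hρ : 0 ≤ ρ) (hf : ContinuousOn f (sphere 0 ρ)) (n : ℕ) :
    CircleIntegrable (fun z => f z * conj z ^ n) 0 ρ :=
  (hf.mul (continuous_conj.pow n).continuousOn).circleIntegrable hρ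

theorem circleAverage_mul_conj_pow (hρ : 0 < ρ) (hf : DifferentiableOn ℂ f (closedBall 0 ρ))
    (n : ℕ) :
    Real.circleAverage (fun z => f z * conj z ^ n) 0 ρ =
      iteratedDeriv n f 0 / n.factorial * (ρ : ℂ) ^ (2 * n) := by
  have hint : ∮ z in C(0, ρ), (z - 0)⁻¹ • (f z * conj z ^ n) =
      (ρ : ℂ) ^ (2 * n) * ∮ z in C(0, ρ), (1 / (z - 0) ^ (n + 1)) • f z := by
    rw [← circleIntegral.integral_const_mul]
    refine circleIntegral.integral_congr hρ.le fun z hz => ?_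
    have hz0 : z ≠ 0 := ne_of_mem_sphere hz hρ.ne'
    simp only [conj_pow_eq_mul_inv_pow hz hρ.ne', sub_zero, smul_eq_mul, zpow_neg, zpow_natCast]
    field_simp
    ring
  rw [Real.circleAverage_eq_circleIntegral hρ.ne', hint,
    hf.circleIntegral_one_div_sub_center_pow_smul hρ, smul_eq_mul, smul_eq_mul]
  field_simp [two_pi_I_ne_zero]

theorem circleAverage_mul_deriv_mul_conj_pow (hρ : 0 < ρ)
    (hf : ∀ z ∈ sphere (0 : ℂ) ρ, DifferentiableAt ℂ f z)
    (hf' : ContinuousOn (deriv f) (sphere (0 : ℂ) ρ)) (n : ℕ) :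
    Real.circleAverage (fun z => z * deriv f z * conj z ^ n) 0 ρ =
      n * Real.circleAverage (fun z => f z * conj z ^ n) 0 ρ := by
  have hdiff : ∀ z ∈ sphere (0 : ℂ) |ρ|, HasDerivAt (fun w => f w * w ^ (-n : ℤ))
      (deriv f z * z ^ (-n : ℤ) + f z * ((-n : ℤ) * z ^ (-n - 1 : ℤ))) z := fun z hz => by
    rw [abs_of_pos hρ] at hz
    exact (hf z hz).hasDerivAt.mul (by
      simpa using hasDerivAt_zpow (-n : ℤ) z (Or.inl (ne_of_mem_sphere hz hρ.ne')))
  have hcont : ContinuousOn f (sphere (0 : ℂ) ρ) := fun z hz =>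
    (hf z hz).continuousAt.continuousWithinAt
  have hEq : EqOn (fun z => z * deriv f z * conj z ^ n - (n : ℂ) • (f z * conj z ^ n))
      (fun z => (ρ : ℂ) ^ (2 * n) • ((z - 0) • deriv (fun w => f w * w ^ (-n : ℤ)) z))
      (sphere 0 |ρ|) := fun z hz => by
    have hz' := hz
    rw [abs_of_pos hρ] at hz'
    have hz0 : z ≠ 0 := ne_of_mem_sphere hz' hρ.ne'
    simp only [(hdiff z hz).deriv, conj_pow_eq_mul_inv_pow hz' hρ.ne', sub_zero, smul_eq_mul,
      zpow_sub₀ hz0, zpow_one]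
    push_cast
    field_simp
    ring
  have hzero := circleAverage_sub_smul_deriv_eq_zero fun z hz => (hdiff z hz).differentiableAt
  have hsub : Real.circleAverage
      (fun z => z * deriv f z * conj z ^ n - (n : ℂ) • (f z * conj z ^ n)) 0 ρ = 0 := by
    rw [Real.circleAverage_congr_sphere hEq, Real.circleAverage_fun_smul, hzero, smul_zero]
  rwa [Real.circleAverage_fun_sub
      (circleIntegrable_mul_conj_pow hρ.le (f := fun z => z * deriv f z) (by fun_prop) n)
      (circleIntegrable_mul_conj_pow hρ.le hcont n).const_fun_smul,
    Real.circleAverage_fun_smul, sub_eq_zero] at hsub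

end ConjPow

/-- `f` is a Bloch function of Bloch norm at most `M`: it is holomorphic on the unit disk and
`‖f 0‖ + sup_z (1 - ‖z‖ ^ 2) * ‖deriv f z‖ ≤ M`. The supremum is unfolded into a pointwise bound,
so that its finiteness is part of the condition. -/
structure HasBlochNormLE (f : ℂ → ℂ) (M : ℝ) : Prop where
  differentiableOn : DifferentiableOn ℂ f (ball 0 1)
  bound : ∀ z ∈ ball (0 : ℂ) 1, ‖f 0‖ + (1 - ‖z‖ ^ 2) * ‖deriv f z‖ ≤ M

theorem integrableOn_ball_sub_mul_log_one_sub_norm {E : Type*} [NormedAddCommGroup E]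
    [NormedSpace ℝ E] [FiniteDimensional ℝ E] [Nontrivial E] [MeasurableSpace E] [BorelSpace E]
    {μ : Measure E} [μ.IsAddHaarMeasure] (M : ℝ) :
    IntegrableOn (fun z => M - M * Real.log (1 - ‖z‖)) (ball 0 1) μ := by
  rw [integrableOn_fun_norm_addHaar μ (f := fun s => M - M * Real.log (1 - s))]
  have hlog : IntervalIntegrable (fun s : ℝ => Real.log (1 - s)) volume 0 1 := by
    have h : IntervalIntegrable Real.log volume 0 1 := intervalIntegral.intervalIntegrable_log'
    simpa using (h.comp_sub_left 1).symm
  rw [← intervalIntegrable_iff_integrableOn_Ioo_of_le zero_le_one]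
  exact (intervalIntegrable_const.sub (hlog.const_mul M)).continuousOn_mul (by fun_prop)

namespace HasBlochNormLE

variable {f : ℂ → ℂ} {M : ℝ} {z : ℂ}

theorem norm_apply_zero_le (hf : HasBlochNormLE f M) : ‖f 0‖ ≤ M := by
  have h := hf.bound 0 (mem_ball_self one_pos)
  rw [norm_zero] at h
  linarith [norm_nonneg (deriv f 0)]

theorem nonneg (hf : HasBlochNormLE f M) : 0 ≤ M :=
  (norm_nonneg _).trans hf.norm_apply_zero_le

theorem one_sub_sq_mul_norm_deriv_le (hf : HasBlochNormLE f M) (hz : z ∈ ball (0 : ℂ) 1) :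
    (1 - ‖z‖ ^ 2) * ‖deriv f z‖ ≤ M := by
  linarith [hf.bound z hz, norm_nonneg (f 0)]

theorem norm_deriv_le (hf : HasBlochNormLE f M) (hz : z ∈ ball (0 : ℂ) 1) :
    ‖deriv f z‖ ≤ M / (1 - ‖z‖) := by
  have hz1 : ‖z‖ < 1 := mem_ball_zero_iff.1 hz
  rw [le_div_iff₀ (by linarith), mul_comm]
  refine le_trans ?_ (hf.one_sub_sq_mul_norm_deriv_le hz)
  gcongr
  nlinarith [norm_nonneg z]

theorem norm_le_sub_mul_log (hf : HasBlochNormLE f M) (hz : z ∈ ball (0 : ℂ) 1) :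
    ‖f z‖ ≤ M - M * Real.log (1 - ‖z‖) := by
  have hz1 : ‖z‖ < 1 := mem_ball_zero_iff.1 hz
  have hnorm : ∀ s ∈ Icc (0 : ℝ) 1, ‖(s : ℂ) * z‖ = s * ‖z‖ := fun s hs => by
    rw [norm_mul, norm_real, Real.norm_of_nonneg hs.1]
  have hlt : ∀ s ∈ Icc (0 : ℝ) 1, s * ‖z‖ < 1 := fun s hs =>
    (mul_le_of_le_one_left (norm_nonneg z) hs.2).trans_lt hz1
  have hmem : ∀ s ∈ Icc (0 : ℝ) 1, (s : ℂ) * z ∈ ball (0 : ℂ) 1 := fun s hs =>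
    mem_ball_zero_iff.2 ((hnorm s hs).trans_lt (hlt s hs))
  have hpath : ∀ s ∈ Icc (0 : ℝ) 1,
      HasDerivAt (fun s : ℝ => f (s * z)) (deriv f (s * z) * z) s := fun s hs => by
    have hfs :=
      (hf.differentiableOn.differentiableAt (isOpen_ball.mem_nhds (hmem s hs))).hasDerivAt
    simpa [Function.comp_def] using hfs.comp s ((hasDerivAt_id s).ofReal_comp.mul_const z)
  have hmajorant : ∀ s ∈ Icc (0 : ℝ) 1,
      HasDerivAt (fun s : ℝ => M - M * Real.log (1 - s * ‖z‖)) (M / (1 - s * ‖z‖) * ‖z‖) s :=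
    fun s hs => by
      have h := (((hasDerivAt_mul_const (x := s) ‖z‖).const_sub 1).log
        (sub_pos.2 (hlt s hs)).ne').const_mul M |>.const_sub M
      exact h.congr_deriv (by ring)
  have hle := image_norm_le_of_norm_deriv_right_le_deriv_boundary'
    (fun s hs => (hpath s hs).continuousAt.continuousWithinAt)
    (fun s hs => (hpath s (Ico_subset_Icc_self hs)).hasDerivWithinAt)
    (by simpa using hf.norm_apply_zero_le)
    (fun s hs => (hmajorant s hs).continuousAt.continuousWithinAt)
    (fun s hs => (hmajorant s (Ico_subset_Icc_self hs)).hasDerivWithinAt)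
    (fun s hs => by
      have hs' := Ico_subset_Icc_self hs
      rw [norm_mul, ← hnorm s hs']
      gcongr
      exact hf.norm_deriv_le (hmem s hs'))
    (right_mem_Icc.2 zero_le_one)
  simpa using hle

theorem integrableOn (hf : HasBlochNormLE f M) : IntegrableOn f (ball 0 1) :=
  (integrableOn_ball_sub_mul_log_one_sub_norm M).mono'
    (hf.differentiableOn.continuousOn.aestronglyMeasurable measurableSet_ball)
    (ae_restrict_of_forall_mem measurableSet_ball fun _ hz => hf.norm_le_sub_mul_log hz)

end HasBlochNormLE

/-- A bounded function whose Bergman projection is the Bloch function `f`; it replaces `f` in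
pairings with functions of `A¹`. It equals `f` plus the `∂/∂z`-derivative of
`(1 - ‖z‖ ^ 2) * z * f z`. -/
noncomputable def bergmanPreimage (f : ℂ → ℂ) (z : ℂ) : ℂ :=
  (1 - ‖z‖ ^ 2 : ℝ) * (2 * f z + z * deriv f z)

namespace HasBlochNormLE

variable {f : ℂ → ℂ} {M : ℝ} {z : ℂ}

theorem norm_bergmanPreimage_le (hf : HasBlochNormLE f M) (hz : z ∈ ball (0 : ℂ) 1) :
    ‖bergmanPreimage f z‖ ≤ 5 * M := by
  have hz1 : ‖z‖ < 1 := mem_ball_zero_iff.1 hz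
  have hpos : 0 < 1 - ‖z‖ := by linarith
  have hweight : (1 - ‖z‖ ^ 2) ≤ 2 * (1 - ‖z‖) := by nlinarith [norm_nonneg z]
  have hweight0 : 0 ≤ 1 - ‖z‖ ^ 2 := by nlinarith [norm_nonneg z]
  have hlog : (1 - ‖z‖) * (1 - Real.log (1 - ‖z‖)) ≤ 1 := by
    have h := mul_le_mul_of_nonneg_left (Real.one_sub_inv_le_log_of_pos hpos) hpos.le
    rw [mul_sub, mul_inv_cancel₀ hpos.ne'] at h
    linarith
  have hvalue : (1 - ‖z‖ ^ 2) * ‖f z‖ ≤ 2 * M :=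
    calc (1 - ‖z‖ ^ 2) * ‖f z‖ ≤ 2 * (1 - ‖z‖) * (M - M * Real.log (1 - ‖z‖)) := by
          gcongr
          exact hf.norm_le_sub_mul_log hz
      _ = 2 * M * ((1 - ‖z‖) * (1 - Real.log (1 - ‖z‖))) := by ring
      _ ≤ 2 * M := mul_le_of_le_one_right (by linarith [hf.nonneg]) hlog
  calc ‖bergmanPreimage f z‖
      ≤ (1 - ‖z‖ ^ 2) * (2 * ‖f z‖ + ‖z‖ * ‖deriv f z‖) := by
        rw [bergmanPreimage, norm_mul, norm_real, Real.norm_of_nonneg hweight0]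
        gcongr
        exact (norm_add_le _ _).trans_eq (by rw [norm_mul, norm_mul, norm_ofNat])
    _ = 2 * ((1 - ‖z‖ ^ 2) * ‖f z‖) + ‖z‖ * ((1 - ‖z‖ ^ 2) * ‖deriv f z‖) := by ring
    _ ≤ 2 * (2 * M) + 1 * M := by
        gcongr
        exact hf.one_sub_sq_mul_norm_deriv_le hz
    _ = 5 * M := by ring

theorem aestronglyMeasurable_bergmanPreimage (hf : HasBlochNormLE f M) :
    AEStronglyMeasurable (bergmanPreimage f) (volume.restrict (ball 0 1)) := by
  have hcont : ContinuousOn f (ball 0 1) := hf.differentiableOn.continuousOn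
  have hcont' : ContinuousOn (deriv f) (ball 0 1) :=
    (hf.differentiableOn.deriv isOpen_ball).continuousOn
  exact ContinuousOn.aestronglyMeasurable (by unfold bergmanPreimage; fun_prop) measurableSet_ball

theorem integrableOn_bergmanPreimage (hf : HasBlochNormLE f M) :
    IntegrableOn (bergmanPreimage f) (ball 0 1) :=
  Integrable.mono' (integrableOn_const (C := 5 * M) (by simp))
    hf.aestronglyMeasurable_bergmanPreimage
    (ae_restrict_of_forall_mem measurableSet_ball fun _ hz => hf.norm_bergmanPreimage_le hz)

end HasBlochNormLE

theorem circleAverage_sub_bergmanPreimage_mul_conj_pow {f : ℂ → ℂ} {R ρ : ℝ}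
    (hf : DifferentiableOn ℂ f (ball 0 R)) (hρ : ρ ∈ Ioo 0 R) (n : ℕ) :
    Real.circleAverage (fun z => (f z - bergmanPreimage f z) * conj z ^ n) 0 ρ =
      iteratedDeriv n f 0 / n.factorial * (((n + 2) * ρ ^ 2 - (n + 1)) * ρ ^ (2 * n) : ℝ) := by
  have hsub : sphere (0 : ℂ) ρ ⊆ ball 0 R :=
    sphere_subset_closedBall.trans (closedBall_subset_ball hρ.2)
  have hcont' : ContinuousOn (deriv f) (sphere 0 ρ) :=
    (hf.deriv isOpen_ball).continuousOn.mono hsub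
  have hEq : EqOn (fun z => (f z - bergmanPreimage f z) * conj z ^ n)
      (fun z => ((2 * ρ ^ 2 - 1 : ℝ) : ℂ) • (f z * conj z ^ n) -
        ((1 - ρ ^ 2 : ℝ) : ℂ) • (z * deriv f z * conj z ^ n)) (sphere 0 |ρ|) := fun z hz => by
    rw [mem_sphere_zero_iff_norm, abs_of_pos hρ.1] at hz
    simp only [bergmanPreimage, hz, smul_eq_mul]
    push_cast
    ring
  rw [Real.circleAverage_congr_sphere hEq, Real.circleAverage_fun_sub
      (circleIntegrable_mul_conj_pow hρ.1.le (hf.continuousOn.mono hsub) n).const_fun_smul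
      (circleIntegrable_mul_conj_pow hρ.1.le (f := fun z => z * deriv f z)
        (by fun_prop) n).const_fun_smul,
    Real.circleAverage_fun_smul, Real.circleAverage_fun_smul,
    circleAverage_mul_deriv_mul_conj_pow hρ.1
      (fun z hz => hf.differentiableAt (isOpen_ball.mem_nhds (hsub hz))) hcont',
    circleAverage_mul_conj_pow hρ.1 (hf.mono (closedBall_subset_ball hρ.2))]
  simp only [smul_eq_mul]
  push_cast
  ring

theorem integral_radial_moment_eq_zero (n : ℕ) :
    ∫ ρ in (0 : ℝ)..1, 2 * π * ρ * (((n + 2) * ρ ^ 2 - (n + 1)) * ρ ^ (2 * n)) = 0 := by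
  have hderiv : ∀ ρ : ℝ, HasDerivAt (fun ρ : ℝ => π * (ρ ^ (2 * n + 4) - ρ ^ (2 * n + 2)))
      (2 * π * ρ * (((n + 2) * ρ ^ 2 - (n + 1)) * ρ ^ (2 * n))) ρ := fun ρ => by
    refine (((hasDerivAt_pow (2 * n + 4) ρ).sub (hasDerivAt_pow (2 * n + 2) ρ)).const_mul
      π).congr_deriv ?_
    rw [show 2 * n + 4 - 1 = 2 * n + 3 by lia, show 2 * n + 2 - 1 = 2 * n + 1 by lia]
    push_cast
    ring
  rw [intervalIntegral.integral_eq_sub_of_hasDerivAt (fun ρ _ => hderiv ρ)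
    (Continuous.intervalIntegrable (by fun_prop) _ _)]
  simp

theorem integrableOn_mul_conj {q h : ℂ → ℂ} {s : Set ℂ} {C : ℝ} (hq : IntegrableOn q s)
    (hs : MeasurableSet s) (hh : ContinuousOn h s) (hC : ∀ z ∈ s, ‖h z‖ ≤ C) :
    IntegrableOn (fun z => q z * conj (h z)) s :=
  Integrable.mul_bdd hq ((continuous_conj.comp_continuousOn hh).aestronglyMeasurable hs)
    (ae_restrict_of_forall_mem hs fun z hz => by simpa using hC z hz)

theorem integrableOn_mul_conj_pow {q : ℂ → ℂ} (hq : IntegrableOn q (ball 0 1)) (n : ℕ) :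
    IntegrableOn (fun z => q z * conj z ^ n) (ball 0 1) := by
  simpa using integrableOn_mul_conj (h := (· ^ n)) (C := 1) hq measurableSet_ball (by fun_prop)
    fun z hz => by
      rw [norm_pow]
      exact pow_le_one₀ (norm_nonneg z) (mem_ball_zero_iff.1 hz).le

theorem HasBlochNormLE.integral_sub_bergmanPreimage_mul_conj_pow {f : ℂ → ℂ} {M : ℝ}
    (hf : HasBlochNormLE f M) (n : ℕ) :
    ∫ z in ball 0 1, (f z - bergmanPreimage f z) * conj z ^ n = 0 := by
  have hint : IntegrableOn (fun z => (f z - bergmanPreimage f z) * conj z ^ n) (ball 0 1) :=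
    integrableOn_mul_conj_pow (hf.integrableOn.sub hf.integrableOn_bergmanPreimage) n
  calc ∫ z in ball 0 1, (f z - bergmanPreimage f z) * conj z ^ n
      = ∫ ρ in (0 : ℝ)..1, iteratedDeriv n f 0 / n.factorial *
          (2 * π * ρ * (((n + 2) * ρ ^ 2 - (n + 1)) * ρ ^ (2 * n)) : ℝ) := by
        rw [setIntegral_ball_eq_integral_circleAverage zero_le_one hint]
        refine intervalIntegral.integral_congr_Ioo_of_le zero_le_one fun ρ hρ => ?_
        rw [circleAverage_sub_bergmanPreimage_mul_conj_pow hf.differentiableOn hρ, real_smul,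
          ofReal_mul (2 * π * ρ), mul_left_comm]
    _ = 0 := by
        rw [intervalIntegral.integral_const_mul, intervalIntegral.integral_ofReal,
          integral_radial_moment_eq_zero, ofReal_zero, mul_zero]

theorem integral_mul_conj_eq_zero_of_forall_moment {q h : ℂ → ℂ} {R : ℝ} (hR : 1 < R)
    (hq : IntegrableOn q (ball 0 1)) (hmoment : ∀ n : ℕ, ∫ z in ball 0 1, q z * conj z ^ n = 0)
    (hh : DifferentiableOn ℂ h (ball 0 R)) :
    ∫ z in ball 0 1, q z * conj (h z) = 0 := by
  obtain ⟨a, ha⟩ : ∃ a : ℕ → ℂ, ∀ z ∈ ball (0 : ℂ) R, HasSum (fun n => a n * z ^ n) (h z) :=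
    ⟨fun n => (n.factorial : ℂ)⁻¹ * iteratedDeriv n h 0, fun z hz => by
      simpa [mul_comm, mul_left_comm] using hasSum_taylorSeries_on_ball hh hz⟩
  have hsummable : Summable fun n => ‖a n‖ := by
    simpa using (ha 1 (by simpa using hR)).summable.norm
  have hint : ∀ n, IntegrableOn (fun z => q z * conj z ^ n) (ball 0 1) :=
    integrableOn_mul_conj_pow hq
  have hnorm : ∀ n, ∫ z in ball (0 : ℂ) 1, ‖conj (a n) * (q z * conj z ^ n)‖ ≤
      ‖a n‖ * ∫ z in ball (0 : ℂ) 1, ‖q z‖ := fun n => by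
    simp_rw [norm_mul (conj (a n)), RCLike.norm_conj]
    rw [integral_const_mul]
    gcongr ‖a n‖ * ?_
    refine setIntegral_mono_on (hint n).norm hq.norm measurableSet_ball fun z hz => ?_
    rw [norm_mul, norm_pow, RCLike.norm_conj]
    exact mul_le_of_le_one_right (norm_nonneg _)
      (pow_le_one₀ (norm_nonneg z) (mem_ball_zero_iff.1 hz).le)
  have hseries := hasSum_integral_of_summable_integral_norm
    (fun n => (hint n).const_mul (conj (a n)))
    (Summable.of_nonneg_of_le (fun n => by positivity) hnorm (hsummable.mul_right _))
  simp only [integral_const_mul, hmoment, mul_zero] at hseries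
  refine (setIntegral_congr_fun measurableSet_ball fun z hz => ?_).trans
    (hseries.unique hasSum_zero)
  have hconj : HasSum (fun n => conj (a n * z ^ n)) (conj (h z)) :=
    hasSum_conj'.2 (ha z (ball_subset_ball hR.le hz))
  have hterm : HasSum (fun n => conj (a n) * (q z * conj z ^ n)) (q z * conj (h z)) := by
    simpa [mul_left_comm] using hconj.mul_left (q z)
  exact hterm.tsum_eq.symm

/-- The pairing `⟨f, h⟩ = (1 / π) ∫ f * conj h` over the unit disk, through which the Bloch space is
the dual of the Bergman space `A¹`. It has the junk value `0` where `f * conj h` is not integrable,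
as may happen for a Bloch function `f` and `h ∈ A¹`; the duality takes `h` dilated. -/
noncomputable def bergmanPairing (f h : ℂ → ℂ) : ℂ :=
  (1 / (π : ℂ)) * ∫ z in ball (0 : ℂ) 1, f z * conj (h z)

theorem norm_bergmanPairing_sub_le {u h₁ h₂ : ℂ → ℂ} {C : ℝ}
    (hu : AEStronglyMeasurable u (volume.restrict (ball 0 1)))
    (hC : ∀ z ∈ ball (0 : ℂ) 1, ‖u z‖ ≤ C) (hh₁ : IntegrableOn h₁ (ball 0 1))
    (hh₂ : IntegrableOn h₂ (ball 0 1)) :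
    ‖bergmanPairing u h₁ - bergmanPairing u h₂‖ ≤ C / π * ∫ z in ball 0 1, ‖h₁ z - h₂ z‖ := by
  have hint : ∀ {h : ℂ → ℂ}, IntegrableOn h (ball 0 1) →
      IntegrableOn (fun z => u z * conj (h z)) (ball 0 1) := fun hh =>
    Integrable.bdd_mul (conjLIE.integrable_comp_iff.2 hh) hu
      (ae_restrict_of_forall_mem measurableSet_ball hC)
  calc ‖bergmanPairing u h₁ - bergmanPairing u h₂‖
      = 1 / π * ‖∫ z in ball 0 1, u z * conj (h₁ z - h₂ z)‖ := by
        rw [bergmanPairing, bergmanPairing, ← mul_sub, ← integral_sub (hint hh₁) (hint hh₂),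
          norm_mul, norm_div, norm_one, norm_real, Real.norm_of_nonneg Real.pi_pos.le]
        simp only [map_sub, mul_sub]
    _ ≤ 1 / π * ∫ z in ball 0 1, C * ‖h₁ z - h₂ z‖ := by
        gcongr
        refine norm_integral_le_of_norm_le ((hh₁.sub hh₂).norm.const_mul C)
          (ae_restrict_of_forall_mem measurableSet_ball fun z hz => ?_)
        rw [norm_mul, RCLike.norm_conj]
        gcongr
        exact hC z hz
    _ = C / π * ∫ z in ball 0 1, ‖h₁ z - h₂ z‖ := by
        rw [integral_const_mul]
        ring

theorem exists_forall_mem_ball_norm_le {X E : Type*} [PseudoMetricSpace X] [ProperSpace X]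
    [SeminormedAddCommGroup E] {h : X → E} {c : X} {r R : ℝ} (hrR : r < R)
    (hh : ContinuousOn h (ball c R)) : ∃ C, ∀ z ∈ ball c r, ‖h z‖ ≤ C :=
  let ⟨C, hC⟩ := (isCompact_closedBall c r).exists_bound_of_continuousOn
    (hh.mono (closedBall_subset_ball hrR))
  ⟨C, fun z hz => hC z (ball_subset_closedBall hz)⟩

theorem HasBlochNormLE.bergmanPairing_bergmanPreimage {f h : ℂ → ℂ} {M R : ℝ}
    (hf : HasBlochNormLE f M) (hR : 1 < R) (hh : DifferentiableOn ℂ h (ball 0 R)) :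
    bergmanPairing (bergmanPreimage f) h = bergmanPairing f h := by
  obtain ⟨C, hC⟩ := exists_forall_mem_ball_norm_le hR hh.continuousOn
  have hcont : ContinuousOn h (ball 0 1) := hh.continuousOn.mono (ball_subset_ball hR.le)
  have hzero := integral_mul_conj_eq_zero_of_forall_moment hR
    (hf.integrableOn.sub hf.integrableOn_bergmanPreimage)
    hf.integral_sub_bergmanPreimage_mul_conj_pow hh
  simp only [Pi.sub_apply, sub_mul] at hzero
  rw [integral_sub (integrableOn_mul_conj hf.integrableOn measurableSet_ball hcont hC)
    (integrableOn_mul_conj hf.integrableOn_bergmanPreimage measurableSet_ball hcont hC),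
    sub_eq_zero] at hzero
  rw [bergmanPairing, bergmanPairing, hzero]

theorem differentiableOn_comp_mul_ball {E : Type*} [NormedAddCommGroup E] [NormedSpace ℂ E]
    {g : ℂ → E} {R r : ℝ} (hr : 0 < r) (hg : DifferentiableOn ℂ g (ball 0 R)) :
    DifferentiableOn ℂ (fun z => g (r * z)) (ball 0 (R / r)) :=
  hg.comp (by fun_prop) fun z hz => by
    rw [mem_ball_zero_iff, lt_div_iff₀' hr] at hz
    rwa [mem_ball_zero_iff, norm_mul, norm_real, Real.norm_of_nonneg hr.le]

theorem HasBlochNormLE.norm_bergmanPairing_comp_mul_sub_le {f g : ℂ → ℂ} {M r : ℝ}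
    (hf : HasBlochNormLE f M) (hg : DifferentiableOn ℂ g (ball 0 1))
    (hgint : IntegrableOn g (ball 0 1)) (hr : r ∈ Ioo 0 1) :
    ‖bergmanPairing f (fun z => g (r * z)) - bergmanPairing (bergmanPreimage f) g‖ ≤
      5 * M / π * ∫ z in ball 0 1, ‖g (r * z) - g z‖ := by
  have hR : 1 < 1 / r := (one_lt_div hr.1).2 hr.2
  have hgr := differentiableOn_comp_mul_ball hr.1 hg
  have hgrint : IntegrableOn (fun z => g (r * z)) (ball 0 1) :=
    ((hgr.continuousOn.mono (closedBall_subset_ball hR)).integrableOn_compact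
      (isCompact_closedBall 0 1)).mono_set ball_subset_closedBall
  rw [← hf.bergmanPairing_bergmanPreimage hR hgr]
  exact norm_bergmanPairing_sub_le hf.aestronglyMeasurable_bergmanPreimage
    (fun _ => hf.norm_bergmanPreimage_le) hgrint hgint

theorem tendstoUniformlyOn_bergmanPairing_comp_mul {ι : Type*} {U : Set ι} {b : ι → ℂ → ℂ}
    {g : ℂ → ℂ} {M : ℝ} (hb : ∀ t ∈ U, HasBlochNormLE (b t) M)
    (hg : DifferentiableOn ℂ g (ball 0 1)) (hgint : IntegrableOn g (ball 0 1)) :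
    TendstoUniformlyOn (fun (r : ℝ) t => bergmanPairing (b t) fun z => g (r * z))
      (fun t => bergmanPairing (bergmanPreimage (b t)) g) (𝓝[<] 1) U := by
  have hdilation : Tendsto (fun r : ℝ => 5 * M / π * ∫ z in ball 0 1, ‖g (r * z) - g z‖)
      (𝓝[<] 1) (𝓝 0) := by
    simpa using (tendsto_setIntegral_norm_comp_smul_sub_of_starConvex
      ((convex_ball (0 : ℂ) 1).starConvex (mem_ball_self one_pos))
      measurableSet_ball hgint).const_mul (5 * M / π)
  rw [Metric.tendstoUniformlyOn_iff]
  intro ε hε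
  filter_upwards [hdilation.eventually_lt_const hε, Ioo_mem_nhdsLT one_pos] with r hrε hr t ht
  rw [dist_comm, dist_eq_norm]
  exact ((hb t ht).norm_bergmanPairing_comp_mul_sub_le hg hgint hr).trans_lt hrε

theorem differentiableOn_bergmanPairing {U : Set ℂ} (hU : IsOpen U) {b : ℂ → ℂ → ℂ} {M R : ℝ}
    (hb : ∀ t ∈ U, HasBlochNormLE (b t) M)
    (hbt : ∀ z ∈ ball (0 : ℂ) 1, DifferentiableOn ℂ (b · z) U) {h : ℂ → ℂ} (hR : 1 < R)
    (hh : DifferentiableOn ℂ h (ball 0 R)) :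
    DifferentiableOn ℂ (fun t => bergmanPairing (b t) h) U := by
  obtain ⟨C, hC⟩ := exists_forall_mem_ball_norm_le hR hh.continuousOn
  have hcont : ContinuousOn h (ball 0 1) := hh.continuousOn.mono (ball_subset_ball hR.le)
  refine (differentiableOn_integral_of_dominated hU
    (B := fun z => (M - M * Real.log (1 - ‖z‖)) * C)
    ((integrableOn_ball_sub_mul_log_one_sub_norm M).mul_const C) (fun t ht =>
      (integrableOn_mul_conj (hb t ht).integrableOn measurableSet_ball hcont
        hC).aestronglyMeasurable)
    (ae_restrict_of_forall_mem measurableSet_ball fun z hz => (hbt z hz).mul_const _)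
    (ae_restrict_of_forall_mem measurableSet_ball fun z hz t ht => ?_)).const_mul _
  rw [norm_mul, RCLike.norm_conj]
  have hbound := (hb t ht).norm_le_sub_mul_log hz
  exact mul_le_mul hbound (hC z hz) (norm_nonneg _) ((norm_nonneg _).trans hbound)

theorem stmt14_general {U : Set ℂ} (hU : IsOpen U) {b : ℂ → ℂ → ℂ} {M : ℝ}
    (hb : ∀ t ∈ U, HasBlochNormLE (b t) M)
    (hbt : ∀ z ∈ ball (0 : ℂ) 1, DifferentiableOn ℂ (b · z) U) {g : ℂ → ℂ}
    (hg : DifferentiableOn ℂ g (ball 0 1)) (hgint : IntegrableOn g (ball 0 1)) :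
    ∃ F : ℂ → ℂ, TendstoUniformlyOn
      (fun (r : ℝ) t => bergmanPairing (b t) fun z => g (r * z)) F (𝓝[<] 1) U ∧
      DifferentiableOn ℂ F U := by
  have hunif := tendstoUniformlyOn_bergmanPairing_comp_mul hb hg hgint
  have hdiff : ∀ᶠ r : ℝ in 𝓝[<] 1,
      DifferentiableOn ℂ (fun t => bergmanPairing (b t) fun z => g (r * z)) U := by
    filter_upwards [Ioo_mem_nhdsLT one_pos] with r hr
    exact differentiableOn_bergmanPairing hU hb hbt ((one_lt_div hr.1).2 hr.2)
      (differentiableOn_comp_mul_ball hr.1 hg)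
  exact ⟨_, hunif, hunif.tendstoLocallyUniformlyOn.differentiableOn hdiff hU⟩

end

theorem stmt14 (M : ℝ) (hM : 0 < M) (b : ℂ → ℂ → ℂ)
    (hb1 : ∀ t ∈ Metric.ball (0:ℂ) 1, DifferentiableOn ℂ (b t) (Metric.ball (0:ℂ) 1))
    (hb2 : ∀ z ∈ Metric.ball (0:ℂ) 1,
      DifferentiableOn ℂ (fun t => b t z) (Metric.ball (0:ℂ) 1))
    (hbd : ∀ t ∈ Metric.ball (0:ℂ) 1, ∀ z ∈ Metric.ball (0:ℂ) 1,
      ‖b t 0‖ + (1 - ‖z‖^2) * ‖deriv (b t) z‖ ≤ M)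
    (g : ℂ → ℂ) (hg : DifferentiableOn ℂ g (Metric.ball (0:ℂ) 1))
    (hgint : MeasureTheory.IntegrableOn g (Metric.ball (0:ℂ) 1)) :
    ∃ F : ℂ → ℂ,
      (∀ t ∈ Metric.ball (0:ℂ) 1,
        Filter.Tendsto
          (fun r : ℝ => (1 / (Real.pi : ℂ)) *
            ∫ z in Metric.ball (0:ℂ) 1, b t z * (starRingEnd ℂ) (g ((r : ℂ) * z)))
          (𝓝[<] (1:ℝ)) (𝓝 (F t))) ∧
      DifferentiableOn ℂ F (Metric.ball (0:ℂ) 1) := by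
  obtain ⟨F, hF, hFdiff⟩ :=
    stmt14_general isOpen_ball (fun t ht => ⟨hb1 t ht, hbd t ht⟩) hb2 hg hgint
  exact ⟨F, fun _ ht => hF.tendsto_at ht, hFdiff⟩
end
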